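/- Let γ0, γ1 ∈ ℝ satisfy −1 < γ0, γ1 < 1 and γ1 > γ0 − 2 (the open asymptotic-data triangle). Suppose (w0, w1) is a smooth solution of the radial tt* system (case 4a) on (0, ∞) such that w0(r) → 0 and w1(r) → 0 as r → ∞ and 2·w0(r)/ln r → γ0 and 2·w1(r)/ln r → γ1 as r → 0⁺. Then the fine structure near r = 0 holds: lim_{r→0⁺} (2·w0(r) − γ0·ln r) = ρ0 and lim_{r→0⁺} (2·w1(r) − γ1·ln r) = ρ1, where ρ0 = −ln( 2^{2γ0} · Γ((1+γ0)/4)·Γ((4+γ0+γ1)/8)·Γ((6+γ0−γ1)/8) / ( Γ((3−γ0)/4)·Γ((4−γ0−γ1)/8)·Γ((2−γ0+γ1)/8) ) ) and ρ1 = −ln( 2^{2γ1} · Γ((3+γ1)/4)·Γ((4+γ0+γ1)/8)·Γ((2−γ0+γ1)/8) / ( Γ((1−γ1)/4)·Γ((4−γ0−γ1)/8)·Γ((6+γ0−γ1)/8) ) ). -/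

import Mathlib

open Real Filter

/-- The radial tt* system (case 4a). -/
def IsRadialTTStar (w0 w1 : ℝ → ℝ) : Prop :=
  ∀ r : ℝ, 0 < r →
    (1/2) * deriv (deriv w0) r + (1/(2*r)) * deriv w0 r
        = Real.exp (4 * w0 r) - Real.exp (2 * w1 r - 2 * w0 r) ∧
    (1/2) * deriv (deriv w1) r + (1/(2*r)) * deriv w1 r
        = Real.exp (2 * w1 r - 2 * w0 r) - Real.exp (-(4 * w1 r))

/-!
The system is the isomonodromy condition of a linear equation in `r` with a spectral parameter `l`.
At `l = 0` this equation has a decaying nonnegative solution, unique up to scale, whose value `C` at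
`r = 0` is symmetric under `i ↦ 3 - i` because `w` is skew. Following the solutions with value `C`
at `r = 0` along `l`, the isomonodromy flow preserves their decay and nonnegativity for `l ≥ 0`, and
rescaling as `l → ∞` gives a nonnegative solution of a purely cyclic system depending only on the
exponents and on `C`. The Mellin transforms of that solution satisfy a first-order difference
equation and are log-convex, hence are products of Gamma functions as in the Bohr–Mollerup theorem.
This determines the ratios of the entries of its initial value, and the symmetry of `C` then yields
the constants of the fine structure.
-/

section FineStructure

open Set Topology MeasureTheory

section VolterraSeries

variable {E : Type*} [NormedAddCommGroup E] [NormedSpace ℝ E]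

/-- The `k`-th Picard–Volterra iterate `∫₀ᵗ B(s₁) ∫₀^{s₁} B(s₂) ⋯ C` of the linear equation
`X' = B X`, `X 0 = C`. -/
noncomputable def volterraTerm (B : ℝ → E →L[ℝ] E) (C : E) : ℕ → ℝ → E
  | 0 => fun _ => C
  | k + 1 => fun t => ∫ s in (0 : ℝ)..t, B s (volterraTerm B C k s)

/-- The sum of the Picard–Volterra iterates, which solves `X' = B X`, `X 0 = C`. -/
noncomputable def volterraSeries (B : ℝ → E →L[ℝ] E) (C : E) (t : ℝ) : E :=
  ∑' k, volterraTerm B C k t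

variable {B : ℝ → E →L[ℝ] E} (C : E)

theorem volterraSeries_zero : volterraSeries B C 0 = C := by
  have hterm : ∀ k, k ≠ 0 → volterraTerm B C k 0 = 0 := by
    rintro (_ | k) hk
    · exact absurd rfl hk
    · exact intervalIntegral.integral_same
  rw [volterraSeries, tsum_eq_single 0 hterm, volterraTerm]

theorem volterraSeries_nonneg [PartialOrder E] [IsOrderedAddMonoid E] [IsOrderedModule ℝ E]
    [OrderClosedTopology E] (hB_nonneg : ∀ t, 0 ≤ t → ∀ x, 0 ≤ x → 0 ≤ B t x) (hC : 0 ≤ C) {t : ℝ}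
    (ht : 0 ≤ t) : 0 ≤ volterraSeries B C t := by
  have hterm : ∀ k, ∀ t, 0 ≤ t → 0 ≤ volterraTerm B C k t := by
    intro k
    induction k with
    | zero => exact fun _ _ => hC
    | succ k ih =>
      intro t ht
      change 0 ≤ ∫ s in (0 : ℝ)..t, B s (volterraTerm B C k s)
      rw [intervalIntegral.integral_of_le ht]
      exact integral_nonneg_of_ae (ae_restrict_of_forall_mem measurableSet_Ioc
        fun s hs => hB_nonneg s hs.1.le _ (ih s hs.1.le))
  exact tsum_nonneg fun k => hterm k t ht

theorem continuous_volterraTerm (hB : Continuous B) (k : ℕ) : Continuous (volterraTerm B C k) := by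
  induction k with
  | zero => exact continuous_const
  | succ k ih =>
    exact intervalIntegral.continuous_primitive
      (fun a b => (hB.clm_apply ih).intervalIntegrable a b) 0

theorem exists_norm_volterraTerm_le (hB : Continuous B) (T : ℝ) :
    ∃ K, (∀ t ∈ Icc 0 T, ‖B t‖ ≤ K) ∧
      ∀ k, ∀ t ∈ Icc 0 T, ‖volterraTerm B C k t‖ ≤ ‖C‖ * ((K * T) ^ k / (k.factorial : ℝ)) := by
  obtain ⟨M, hM⟩ := isCompact_Icc.exists_bound_of_continuousOn (hB.continuousOn (s := Icc 0 T))
  set K := max M 0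
  have hK : 0 ≤ K := le_max_right _ _
  have hBK : ∀ t ∈ Icc 0 T, ‖B t‖ ≤ K := fun t ht => (hM t ht).trans (le_max_left _ _)
  have hterm : ∀ k, ∀ t ∈ Icc 0 T,
      ‖volterraTerm B C k t‖ ≤ ‖C‖ * ((K * t) ^ k / (k.factorial : ℝ)) := by
    intro k
    induction k with
    | zero => intro t _; simp [volterraTerm]
    | succ k ih =>
      intro t ht
      calc ‖volterraTerm B C (k + 1) t‖
          ≤ ∫ s in (0 : ℝ)..t, K * (‖C‖ * ((K * s) ^ k / (k.factorial : ℝ))) := by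
            refine intervalIntegral.norm_integral_le_of_norm_le ht.1
              (Eventually.of_forall fun s hs => ?_)
              (Continuous.intervalIntegrable (by fun_prop) _ _)
            have hs' : s ∈ Icc 0 T := ⟨hs.1.le, hs.2.trans ht.2⟩
            exact (B s).le_of_opNorm_le_of_le (hBK s hs') (ih s hs')
        _ = ∫ s in (0 : ℝ)..t, (‖C‖ * K ^ (k + 1) / (k.factorial : ℝ)) * s ^ k := by
            congr 1; ext s; rw [mul_pow]; ring
        _ = ‖C‖ * ((K * t) ^ (k + 1) / ((k + 1).factorial : ℝ)) := by
            rw [intervalIntegral.integral_const_mul, integral_pow, Nat.factorial_succ]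
            have : (k.factorial : ℝ) ≠ 0 := by positivity
            push_cast
            field_simp
            rw [mul_pow]
            ring
  refine ⟨K, hBK, fun k t ht => (hterm k t ht).trans ?_⟩
  have := ht.1
  have := ht.2
  gcongr

theorem summable_const_mul_pow_div_factorial (c x : ℝ) :
    Summable fun k : ℕ => c * (x ^ k / (k.factorial : ℝ)) :=
  (Real.summable_pow_div_factorial x).mul_left c

variable [CompleteSpace E]

theorem summable_volterraTerm (hB : Continuous B) {t : ℝ} (ht : 0 ≤ t) :
    Summable fun k => volterraTerm B C k t := by
  obtain ⟨K, -, hterm⟩ := exists_norm_volterraTerm_le C hB t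
  exact .of_norm_bounded (summable_const_mul_pow_div_factorial ‖C‖ (K * t))
    fun k => hterm k t ⟨ht, le_rfl⟩

theorem continuousOn_volterraSeries (hB : Continuous B) (T : ℝ) :
    ContinuousOn (volterraSeries B C) (Icc 0 T) := by
  obtain ⟨K, -, hterm⟩ := exists_norm_volterraTerm_le C hB T
  exact continuousOn_tsum (fun k => (continuous_volterraTerm C hB k).continuousOn)
    (summable_const_mul_pow_div_factorial ‖C‖ (K * T)) hterm

theorem hasDerivAt_volterraSeries (hB : Continuous B) {t : ℝ} (ht : 0 < t) :
    HasDerivAt (volterraSeries B C) (B t (volterraSeries B C t)) t := by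
  obtain ⟨K, hBK, hterm⟩ := exists_norm_volterraTerm_le C hB (t + 1)
  have htail : ∀ s, 0 ≤ s →
      volterraSeries B C s = C + ∑' k, volterraTerm B C (k + 1) s := fun s hs =>
    (summable_volterraTerm C hB hs).tsum_eq_zero_add
  have htail_deriv : HasDerivAt (fun s => ∑' k, volterraTerm B C (k + 1) s)
      (∑' k, B t (volterraTerm B C k t)) t := by
    have ht_mem : t ∈ Ioo 0 (t + 1) := ⟨ht, lt_add_one t⟩
    refine hasDerivAt_tsum_of_isPreconnected (g' := fun k s => B s (volterraTerm B C k s))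
      ((summable_const_mul_pow_div_factorial ‖C‖ (K * (t + 1))).mul_left K)
      isOpen_Ioo isPreconnected_Ioo (fun k s _ => ?_) (fun k s hs => ?_) ht_mem
      ((summable_nat_add_iff 1).2 (summable_volterraTerm C hB ht.le)) ht_mem
    · have hcont := hB.clm_apply (continuous_volterraTerm C hB k)
      exact intervalIntegral.integral_hasDerivAt_right (hcont.intervalIntegrable _ _)
        (hcont.stronglyMeasurableAtFilter _ _) hcont.continuousAt
    · have hs' : s ∈ Icc 0 (t + 1) := ⟨hs.1.le, hs.2.le⟩
      exact (B s).le_of_opNorm_le_of_le (hBK s hs') (hterm k s hs')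
  rw [← (B t).map_tsum (summable_volterraTerm C hB ht.le)] at htail_deriv
  refine (htail_deriv.const_add C).congr_of_eventuallyEq ?_
  filter_upwards [Ioi_mem_nhds ht] with s hs using htail s (le_of_lt hs)

end VolterraSeries

section SingularLinearODE

variable {E F : Type*} [NormedAddCommGroup E] [NormedSpace ℝ E]
  [NormedAddCommGroup F]

/-- `X` solves the linear equation `X' = A(r) X` on the half-line `r > 0`. -/
def IsLinearSolution (A : ℝ → E →L[ℝ] E) (X : ℝ → E) : Prop :=
  ∀ r, 0 < r → HasDerivAt X (A r (X r)) r

/-- A function on `r > 0` with a singularity at the origin of size `O(r ^ (δ - 1))`, which is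
integrable for `0 < δ`. -/
structure IsMildlySingular (δ : ℝ) (f : ℝ → F) : Prop where
  continuousOn : ContinuousOn f (Ioi 0)
  exists_norm_le : ∀ R, ∃ K, ∀ r ∈ Ioc 0 R, ‖f r‖ ≤ K * r ^ (δ - 1)

theorem IsLinearSolution.continuousOn {A : ℝ → E →L[ℝ] E} {X : ℝ → E}
    (hX : IsLinearSolution A X) : ContinuousOn X (Ioi 0) :=
  fun r hr => (hX r hr).continuousAt.continuousWithinAt

theorem isLinearSolution_zero (A : ℝ → E →L[ℝ] E) : IsLinearSolution A 0 := fun r _ => by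
  simp only [Pi.zero_apply, map_zero]
  exact hasDerivAt_const r 0

theorem IsLinearSolution.sub {A : ℝ → E →L[ℝ] E} {X Y : ℝ → E} (hX : IsLinearSolution A X)
    (hY : IsLinearSolution A Y) : IsLinearSolution A (X - Y) := fun r hr => by
  simpa only [Pi.sub_apply, map_sub] using (hX r hr).sub (hY r hr)

theorem IsLinearSolution.const_smul {A : ℝ → E →L[ℝ] E} {X : ℝ → E} (hX : IsLinearSolution A X)
    (c : ℝ) : IsLinearSolution A (c • X) := fun r hr => by
  simpa only [Pi.smul_apply, map_smul] using (hX r hr).const_smul c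

theorem IsLinearSolution.eqOn {A : ℝ → E →L[ℝ] E} {X Y : ℝ → E} (hA : ContinuousOn A (Ioi 0))
    (hX : IsLinearSolution A X) (hY : IsLinearSolution A Y) {r₀ : ℝ} (hr₀ : 0 < r₀)
    (h_eq : X r₀ = Y r₀) : EqOn X Y (Ioi 0) := by
  intro r (hr : 0 < r)
  set a := min r r₀ / 2
  set b := max r r₀ + 1
  have ha : 0 < a := by positivity
  have har : a < min r r₀ := half_lt_self (lt_min hr hr₀)
  have hrb : max r r₀ < b := lt_add_one _
  have hpos : Icc a b ⊆ Ioi 0 := fun t ht => ha.trans_le ht.1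
  obtain ⟨K, hK⟩ := isCompact_Icc.exists_bound_of_continuousOn (hA.mono hpos)
  have hlip : ∀ t ∈ Ioo a b, LipschitzOnWith K.toNNReal (fun x => A t x) univ := fun t ht =>
    ((A t).lipschitz.weaken (NNReal.coe_le_coe.1
      ((hK t (Ioo_subset_Icc_self ht)).trans (le_coe_toNNReal K)))).lipschitzOnWith
  have mem_Ioo : ∀ t, min r r₀ ≤ t → t ≤ max r r₀ → t ∈ Ioo a b := fun t h₁ h₂ =>
    ⟨har.trans_le h₁, h₂.trans_lt hrb⟩
  exact ODE_solution_unique_of_mem_Icc hlip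
    (mem_Ioo r₀ (min_le_right _ _) (le_max_right _ _))
    (hX.continuousOn.mono hpos) (fun t ht => hX t (hpos (Ioo_subset_Icc_self ht)))
    (fun _ _ => mem_univ _)
    (hY.continuousOn.mono hpos) (fun t ht => hY t (hpos (Ioo_subset_Icc_self ht)))
    (fun _ _ => mem_univ _) h_eq
    (Ioo_subset_Icc_self (mem_Ioo r (min_le_left _ _) (le_max_left _ _)))

theorem tendsto_rpow_nhdsGT_zero {e : ℝ} (he : 0 < e) :
    Tendsto (fun u : ℝ => u ^ e) (𝓝[>] 0) (𝓝[>] 0) := by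
  refine tendsto_nhdsWithin_iff.2 ⟨?_, ?_⟩
  · simpa only [zero_rpow he.ne'] using
      ((continuousAt_rpow_const 0 e (Or.inr he.le)).tendsto).mono_left nhdsWithin_le_nhds
  · filter_upwards [self_mem_nhdsWithin] with u hu using rpow_pos_of_pos hu e

/-- The pull-back of `f(r) dr` under the substitution `r = u ^ (1 + 2 / δ)`, whose exponent is
chosen large enough to make it vanish at `u = 0` when `f` is `O(r ^ (δ - 1))`. -/
noncomputable def desingularization [NormedSpace ℝ F] (δ : ℝ) (f : ℝ → F) (u : ℝ) : F :=
  ((1 + 2 / δ) * u ^ (2 / δ)) • f (u ^ (1 + 2 / δ))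

theorem norm_desingularization_le [NormedSpace ℝ F] {f : ℝ → F} {δ K u : ℝ} (hδ : 0 < δ)
    (hu : 0 < u) (hK : ‖f (u ^ (1 + 2 / δ))‖ ≤ K * (u ^ (1 + 2 / δ)) ^ (δ - 1)) :
    ‖desingularization δ f u‖ ≤ (1 + 2 / δ) * K * u ^ (1 + δ) := by
  have hcancel : u ^ (2 / δ) * (u ^ (1 + 2 / δ)) ^ (δ - 1) = u ^ (1 + δ) := by
    rw [← rpow_mul hu.le, ← rpow_add hu]
    congr 1
    field_simp
    ring
  calc ‖desingularization δ f u‖ = (1 + 2 / δ) * u ^ (2 / δ) * ‖f (u ^ (1 + 2 / δ))‖ := by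
        rw [desingularization, norm_smul, Real.norm_of_nonneg (by positivity)]
    _ ≤ (1 + 2 / δ) * u ^ (2 / δ) * (K * (u ^ (1 + 2 / δ)) ^ (δ - 1)) := by gcongr
    _ = (1 + 2 / δ) * K * u ^ (1 + δ) := by rw [← hcancel]; ring

theorem IsMildlySingular.continuousOn_desingularization [NormedSpace ℝ F] {f : ℝ → F} {δ : ℝ}
    (hδ : 0 < δ) (hf : IsMildlySingular δ f) : ContinuousOn (desingularization δ f) (Ici 0) := by
  have he : 0 < 1 + 2 / δ := by positivity
  have h0 : desingularization δ f 0 = 0 := by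
    simp only [desingularization, zero_rpow (by positivity : 2 / δ ≠ 0), mul_zero, zero_smul]
  intro u (hu : 0 ≤ u)
  rcases hu.eq_or_lt with rfl | hu
  · obtain ⟨K, hK⟩ := hf.exists_norm_le 1
    have hbound : ∀ᶠ u in 𝓝[>] (0 : ℝ),
        ‖desingularization δ f u‖ ≤ (1 + 2 / δ) * K * u ^ (1 + δ) := by
      filter_upwards [Ioc_mem_nhdsGT one_pos] with u hu
      exact norm_desingularization_le hδ hu.1
        (hK _ ⟨rpow_pos_of_pos hu.1 _, rpow_le_one hu.1.le hu.2 he.le⟩)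
    have hlim : Tendsto (fun u : ℝ => (1 + 2 / δ) * K * u ^ (1 + δ)) (𝓝[>] 0) (𝓝 0) := by
      simpa using ((tendsto_rpow_nhdsGT_zero (by positivity : 0 < 1 + δ)).mono_right
        nhdsWithin_le_nhds).const_mul ((1 + 2 / δ) * K)
    rw [← Ioi_insert, continuousWithinAt_insert_self, ContinuousWithinAt, h0]
    exact squeeze_zero_norm' hbound hlim
  · have hfu : ContinuousAt f (u ^ (1 + 2 / δ)) :=
      hf.continuousOn.continuousAt (Ioi_mem_nhds (rpow_pos_of_pos hu _))
    exact ((continuousAt_const.mul (continuousAt_rpow_const u _ (Or.inl hu.ne'))).smul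
      (hfu.comp_of_eq (continuousAt_rpow_const u _ (Or.inl hu.ne')) rfl)).continuousWithinAt

theorem exists_norm_le_on_Ioc_of_eventually {f : ℝ → F} {M₀ : ℝ} (hf : ContinuousOn f (Ioi 0))
    (h0 : ∀ᶠ r in 𝓝[>] 0, ‖f r‖ ≤ M₀) (R : ℝ) : ∃ M, 0 ≤ M ∧ ∀ r ∈ Ioc 0 R, ‖f r‖ ≤ M := by
  obtain ⟨ε, hε : 0 < ε, hεf⟩ := mem_nhdsGT_iff_exists_Ioo_subset.1 h0
  obtain ⟨M, hM⟩ := isCompact_Icc.exists_bound_of_continuousOn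
    (hf.mono fun r (hr : r ∈ Icc ε R) => hε.trans_le hr.1)
  refine ⟨max |M₀| M, (abs_nonneg _).trans (le_max_left _ _), fun r hr => ?_⟩
  rcases lt_or_ge r ε with h | h
  · exact (hεf ⟨hr.1, h⟩).trans ((le_abs_self _).trans (le_max_left _ _))
  · exact (hM r ⟨h, hr.2⟩).trans (le_max_right _ _)

theorem exists_norm_le_on_Ioc {f : ℝ → F} {y : F} (hf : ContinuousOn f (Ioi 0))
    (h0 : Tendsto f (𝓝[>] 0) (𝓝 y)) (R : ℝ) : ∃ M, 0 ≤ M ∧ ∀ r ∈ Ioc 0 R, ‖f r‖ ≤ M :=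
  exists_norm_le_on_Ioc_of_eventually hf (h0.norm.eventually_le_const (lt_add_one _)) R

theorem gronwallBound_zero_eq_mul (K ε x : ℝ) :
    gronwallBound 0 K ε x = ε * gronwallBound 0 K 1 x := by
  rcases eq_or_ne K 0 with rfl | hK
  · simp [gronwallBound_K0]
  · simp only [gronwallBound_of_K_ne_0 hK]
    ring

theorem continuous_gronwallBound (K ε : ℝ) :
    Continuous fun p : ℝ × ℝ => gronwallBound p.1 K ε p.2 := by
  rcases eq_or_ne K 0 with rfl | hK
  · simp only [gronwallBound_K0]
    fun_prop
  · simp only [gronwallBound_of_K_ne_0 hK]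
    fun_prop

theorem norm_le_of_norm_deriv_le {f f' : ℝ → E} {K η R : ℝ}
    (hf : ∀ r ∈ Ioc 0 R, HasDerivAt f (f' r) r)
    (bound : ∀ r ∈ Ioc 0 R, ‖f' r‖ ≤ K * ‖f r‖ + η)
    (h0 : Tendsto f (𝓝[>] 0) (𝓝 0)) {r : ℝ} (hr : r ∈ Ioc 0 R) :
    ‖f r‖ ≤ η * gronwallBound 0 K 1 r := by
  have hfrom : ∀ᶠ u in 𝓝[>] (0 : ℝ), ‖f r‖ ≤ gronwallBound ‖f u‖ K η (r - u) := by
    filter_upwards [Ioo_mem_nhdsGT hr.1] with u hu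
    have hmem : ∀ t ∈ Icc u r, t ∈ Ioc 0 R := fun t ht =>
      ⟨hu.1.trans_le ht.1, ht.2.trans hr.2⟩
    exact norm_le_gronwallBound_of_norm_deriv_right_le
      (fun t ht => (hf t (hmem t ht)).continuousAt.continuousWithinAt)
      (fun t ht => (hf t (hmem t (Ico_subset_Icc_self ht))).hasDerivWithinAt) le_rfl
      (fun t ht => bound t (hmem t (Ico_subset_Icc_self ht))) r ⟨hu.2.le, le_rfl⟩
  have hstart : Tendsto (fun u => (‖f u‖, r - u)) (𝓝[>] 0) (𝓝 (0, r)) := by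
    refine Tendsto.prodMk_nhds (by simpa using h0.norm) ?_
    have hcont : Continuous fun u : ℝ => r - u := by fun_prop
    simpa using (hcont.tendsto 0).mono_left nhdsWithin_le_nhds
  rw [← gronwallBound_zero_eq_mul]
  exact ge_of_tendsto (((continuous_gronwallBound K η).tendsto _).comp hstart) hfrom

theorem norm_le_of_norm_deriv_le_rpow {f f' : ℝ → E} {δ K η R : ℝ} (hδ : 0 < δ)
    (hf : ∀ r ∈ Ioc 0 R, HasDerivAt f (f' r) r)
    (bound : ∀ r ∈ Ioc 0 R, ‖f' r‖ ≤ (K * ‖f r‖ + η) * r ^ (δ - 1))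
    (h0 : Tendsto f (𝓝[>] 0) (𝓝 0)) {r : ℝ} (hr : r ∈ Ioc 0 R) :
    ‖f r‖ ≤ η * (gronwallBound 0 (K / δ) 1 (r ^ δ) / δ) := by
  have hmem : ∀ u ∈ Ioc 0 (r ^ δ), u ^ δ⁻¹ ∈ Ioc 0 R := fun u hu =>
    ⟨rpow_pos_of_pos hu.1 _, ((rpow_le_rpow hu.1.le hu.2 (inv_nonneg.2 hδ.le)).trans_eq
      (rpow_rpow_inv hr.1.le hδ.ne')).trans hr.2⟩
  have hbound : ∀ u ∈ Ioc 0 (r ^ δ), ‖(δ⁻¹ * u ^ (δ⁻¹ - 1)) • f' (u ^ δ⁻¹)‖ ≤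
      K / δ * ‖f (u ^ δ⁻¹)‖ + η / δ := by
    intro u hu
    have hu0 : 0 < u := hu.1
    have hcancel : u ^ (δ⁻¹ - 1) * (u ^ δ⁻¹) ^ (δ - 1) = 1 := by
      rw [← rpow_mul hu0.le, ← rpow_add hu0,
        show δ⁻¹ - 1 + δ⁻¹ * (δ - 1) = 0 by field_simp; ring, rpow_zero]
    rw [norm_smul, Real.norm_of_nonneg (by positivity)]
    calc δ⁻¹ * u ^ (δ⁻¹ - 1) * ‖f' (u ^ δ⁻¹)‖
        ≤ δ⁻¹ * u ^ (δ⁻¹ - 1) * ((K * ‖f (u ^ δ⁻¹)‖ + η) * (u ^ δ⁻¹) ^ (δ - 1)) := by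
          gcongr; exact bound _ (hmem u hu)
      _ = δ⁻¹ * (K * ‖f (u ^ δ⁻¹)‖ + η) * (u ^ (δ⁻¹ - 1) * (u ^ δ⁻¹) ^ (δ - 1)) := by ring
      _ = K / δ * ‖f (u ^ δ⁻¹)‖ + η / δ := by rw [hcancel]; field_simp
  have hle := norm_le_of_norm_deriv_le (f := fun u => f (u ^ δ⁻¹))
    (fun u hu => (hf _ (hmem u hu)).scomp u (hasDerivAt_rpow_const (Or.inl hu.1.ne'))) hbound
    (h0.comp (tendsto_rpow_nhdsGT_zero (inv_pos.2 hδ))) ⟨rpow_pos_of_pos hr.1 δ, le_rfl⟩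
  rw [rpow_rpow_inv hr.1.le hδ.ne'] at hle
  exact hle.trans_eq (by ring)

theorem exists_isLinearSolution [CompleteSpace E] {A : ℝ → E →L[ℝ] E} {δ : ℝ} (hδ : 0 < δ)
    (hA : IsMildlySingular δ A) (C : E) :
    ∃ X, IsLinearSolution A X ∧ Tendsto X (𝓝[>] 0) (𝓝 C) := by
  set e := 1 + 2 / δ with he_def
  have he : 0 < e := by positivity
  set B : ℝ → E →L[ℝ] E := fun u => desingularization δ A (max u 0)
  have hB : Continuous B := (hA.continuousOn_desingularization hδ).comp_continuous
    (by fun_prop) fun u => mem_Ici.2 (le_max_right u 0)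
  refine ⟨fun r => volterraSeries B C (r ^ e⁻¹), fun r hr => ?_, ?_⟩
  · have hu : 0 < r ^ e⁻¹ := rpow_pos_of_pos hr _
    have hchain := (hasDerivAt_volterraSeries C hB hu).scomp r
      (hasDerivAt_rpow_const (p := e⁻¹) (Or.inl hr.ne'))
    have hjac : e⁻¹ * r ^ (e⁻¹ - 1) * (e * (r ^ e⁻¹) ^ (2 / δ)) = 1 := by
      rw [show 2 / δ = e - 1 by rw [he_def]; ring, ← rpow_mul hr.le]
      have hexp : r ^ (e⁻¹ - 1) * r ^ (e⁻¹ * (e - 1)) = 1 := by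
        rw [← rpow_add hr, show e⁻¹ - 1 + e⁻¹ * (e - 1) = 0 by field_simp; ring, rpow_zero]
      calc e⁻¹ * r ^ (e⁻¹ - 1) * (e * r ^ (e⁻¹ * (e - 1)))
          = e⁻¹ * e * (r ^ (e⁻¹ - 1) * r ^ (e⁻¹ * (e - 1))) := by ring
        _ = 1 := by rw [hexp, inv_mul_cancel₀ he.ne', mul_one]
    have hBu : B (r ^ e⁻¹) = (e * (r ^ e⁻¹) ^ (2 / δ)) • A r := by
      simp only [B, max_eq_left hu.le, desingularization, ← he_def, rpow_inv_rpow hr.le he.ne']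
    rw [hBu, smul_apply, smul_smul, hjac, one_smul] at hchain
    exact hchain
  · have hcont : Tendsto (volterraSeries B C) (𝓝[>] 0) (𝓝 C) := by
      have h := (continuousOn_volterraSeries C hB 1 0 (by simp)).tendsto
      rw [volterraSeries_zero] at h
      exact h.mono_left (nhdsWithin_le_of_mem (Icc_mem_nhdsGT one_pos))
    exact hcont.comp (tendsto_rpow_nhdsGT_zero (by positivity))

theorem IsLinearSolution.tendsto_of_tendsto {α : Type*} {l : Filter α} {A : ℝ → E →L[ℝ] E}
    {A' : α → ℝ → E →L[ℝ] E} {X : ℝ → E} {X' : α → ℝ → E} {C : E} {δ S : ℝ} (hδ : 0 < δ)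
    (hS : 0 < S) (hA : IsMildlySingular δ A) (hX : IsLinearSolution A X)
    (hX' : ∀ a, IsLinearSolution (A' a) (X' a)) (hX0 : Tendsto X (𝓝[>] 0) (𝓝 C))
    (hX'0 : ∀ a, Tendsto (X' a) (𝓝[>] 0) (𝓝 C))
    (hA' : ∀ ε > 0, ∀ᶠ a in l, ∀ s ∈ Ioc 0 S, ‖A' a s - A s‖ ≤ ε * s ^ (δ - 1)) :
    Tendsto (fun a => X' a S) l (𝓝 (X S)) := by
  obtain ⟨K, hK⟩ := hA.exists_norm_le S
  obtain ⟨M, -, hXM⟩ := exists_norm_le_on_Ioc hX.continuousOn hX0 S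
  have hclose : ∀ ε ∈ Ioc (0 : ℝ) 1, ∀ᶠ a in l,
      ‖X' a S - X S‖ ≤ ε * M * (gronwallBound 0 ((K + 1) / δ) 1 (S ^ δ) / δ) := by
    intro ε hε
    filter_upwards [hA' ε hε.1] with a ha
    refine norm_le_of_norm_deriv_le_rpow (f := fun r => X' a r - X r)
      (f' := fun r => A' a r (X' a r) - A r (X r)) hδ
      (fun r hr => (hX' a r hr.1).sub (hX r hr.1)) (fun r hr => ?_)
      (by simpa using (hX'0 a).sub hX0) ⟨hS, le_rfl⟩
    have hr0 : 0 < r := hr.1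
    have hA'r : ‖A' a r‖ ≤ (K + 1) * r ^ (δ - 1) := by
      have hsub : ‖A' a r - A r‖ ≤ 1 * r ^ (δ - 1) := (ha r hr).trans (by gcongr; exact hε.2)
      linarith [norm_le_norm_add_norm_sub' (A' a r) (A r), hK r hr]
    calc ‖A' a r (X' a r) - A r (X r)‖
        = ‖A' a r (X' a r - X r) + (A' a r - A r) (X r)‖ := by
          rw [map_sub, sub_apply, sub_add_sub_cancel]
      _ ≤ (K + 1) * r ^ (δ - 1) * ‖X' a r - X r‖ + ε * r ^ (δ - 1) * M :=
          norm_add_le_of_le ((A' a r).le_of_opNorm_le hA'r _)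
            ((A' a r - A r).le_of_opNorm_le_of_le (ha r hr) (hXM r hr))
      _ = ((K + 1) * ‖X' a r - X r‖ + ε * M) * r ^ (δ - 1) := by ring
  set c := M * (gronwallBound 0 ((K + 1) / δ) 1 (S ^ δ) / δ)
  refine Metric.tendsto_nhds.2 fun ε' hε' => ?_
  have hsmall : Tendsto (fun ε : ℝ => ε * c) (𝓝[>] 0) (𝓝 0) := by
    simpa only [zero_mul] using
      (((continuous_mul_const c).tendsto (0 : ℝ)).mono_left nhdsWithin_le_nhds)
  obtain ⟨ε, hεc, hε⟩ := ((hsmall.eventually_lt_const hε').and (Ioc_mem_nhdsGT one_pos)).exists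
  filter_upwards [hclose ε hε] with a ha
  rw [dist_eq_norm]
  exact (ha.trans_eq (mul_assoc _ _ _)).trans_lt hεc

theorem isLittleO_norm_remainder [NormedSpace ℝ F] {f : ℝ → F} {f' : F} {l : ℝ}
    (hf : HasDerivAt f f' l) :
    (fun m => ‖f m - f l - (m - l) • f'‖ + ‖m - l‖ * ‖f m - f l‖) =o[𝓝 l] fun m => m - l := by
  have hcont : Tendsto (fun m => ‖f m - f l‖) (𝓝 l) (𝓝 0) :=
    tendsto_iff_norm_sub_tendsto_zero.1 hf.continuousAt
  have hprod := (Asymptotics.isBigO_refl (fun m : ℝ => m - l) (𝓝 l)).norm_left.mul_isLittleO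
    ((Asymptotics.isLittleO_one_iff ℝ).2 hcont)
  simp only [mul_one] at hprod
  exact (hasDerivAt_iff_isLittleO (f := f)).1 hf |>.norm_left.add hprod

theorem eventually_norm_lt_add_one [NormedSpace ℝ F] {f : ℝ → F} {f' : F} {l : ℝ}
    (hf : HasDerivAt f f' l) : ∀ᶠ m in 𝓝 l, ‖f m‖ < ‖f l‖ + 1 :=
  hf.continuousAt.norm.eventually_lt_const (lt_add_one _)

theorem norm_bilinear_remainder_le [NormedSpace ℝ F] (L₁ L L' : F →L[ℝ] E →L[ℝ] E) (e : F)
    (x₁ x v : E) (η : ℝ) :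
    ‖L₁ e x₁ - L e x - η • (L e v + L' e x)‖ ≤ ‖L₁‖ * ‖e‖ * ‖x₁ - x - η • v‖ +
      (‖L₁ - L - η • L'‖ * ‖e‖ * ‖x‖ + ‖η‖ * (‖L₁ - L‖ * ‖e‖ * ‖v‖)) := by
  have hsplit : L₁ e x₁ - L e x - η • (L e v + L' e x) =
      L₁ e (x₁ - x - η • v) + ((L₁ - L - η • L') e x + η • (L₁ - L) e v) := by
    simp only [map_sub, map_smul, sub_apply, smul_apply, smul_add, smul_sub]
    abel
  rw [hsplit]
  refine norm_add_le_of_le (L₁.le_opNorm₂ _ _)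
    (norm_add_le_of_le (ContinuousLinearMap.le_opNorm₂ _ _ _) ?_)
  rw [norm_smul]
  gcongr
  exact ContinuousLinearMap.le_opNorm₂ _ _ _

theorem hasDerivAt_parameter_of_isLinearSolution [NormedSpace ℝ F] {Λ : ℝ → F →L[ℝ] E →L[ℝ] E}
    {Λ' : F →L[ℝ] E →L[ℝ] E} {e : ℝ → F} {G : ℝ → ℝ → E} {V : ℝ → E} {C : E} {δ l r : ℝ}
    (hδ : 0 < δ) (he : IsMildlySingular δ e) (hΛ : HasDerivAt Λ Λ' l)
    (hG : ∀ m, IsLinearSolution (fun s => Λ m (e s)) (G m))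
    (hG0 : ∀ m, Tendsto (G m) (𝓝[>] 0) (𝓝 C))
    (hV : ∀ s, 0 < s → HasDerivAt V (Λ l (e s) (V s) + Λ' (e s) (G l s)) s)
    (hV0 : Tendsto V (𝓝[>] 0) (𝓝 0)) (hr : 0 < r) : HasDerivAt (fun m => G m r) (V r) l := by
  obtain ⟨K, hK⟩ := he.exists_norm_le r
  obtain ⟨M₁, hM₁, hGM⟩ := exists_norm_le_on_Ioc (hG l).continuousOn (hG0 l) r
  obtain ⟨M₂, hM₂, hVM⟩ := exists_norm_le_on_Ioc
    (fun s hs => (hV s hs).continuousAt.continuousWithinAt) hV0 r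
  set ρ : ℝ → ℝ := fun m => ‖Λ m - Λ l - (m - l) • Λ'‖ + ‖m - l‖ * ‖Λ m - Λ l‖
  have hbound : ∀ᶠ m in 𝓝 l, ‖G m r - G l r - (m - l) • V r‖ ≤
      K * (M₁ + M₂) * ρ m * (gronwallBound 0 ((‖Λ l‖ + 1) * K / δ) 1 (r ^ δ) / δ) := by
    filter_upwards [eventually_norm_lt_add_one (F := F →L[ℝ] E →L[ℝ] E) hΛ] with m hm
    refine norm_le_of_norm_deriv_le_rpow (f := fun s => G m s - G l s - (m - l) • V s) hδ
      (fun s hs => ((hG m s hs.1).sub (hG l s hs.1)).sub ((hV s hs.1).const_smul (m - l)))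
      (fun s hs => ?_) (by simpa using ((hG0 m).sub (hG0 l)).sub (hV0.const_smul (m - l)))
      ⟨hr, le_rfl⟩
    have hG_le : ‖G l s‖ ≤ M₁ + M₂ := (hGM s hs).trans (le_add_of_nonneg_right hM₂)
    have hV_le : ‖V s‖ ≤ M₁ + M₂ := (hVM s hs).trans (le_add_of_nonneg_left hM₁)
    refine (norm_bilinear_remainder_le _ _ _ _ _ _ _ _).trans ?_
    calc _ ≤ (‖Λ l‖ + 1) * ‖e s‖ * ‖G m s - G l s - (m - l) • V s‖ +
          (‖Λ m - Λ l - (m - l) • Λ'‖ * ‖e s‖ * (M₁ + M₂) +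
            ‖m - l‖ * (‖Λ m - Λ l‖ * ‖e s‖ * (M₁ + M₂))) := by gcongr
      _ = ((‖Λ l‖ + 1) * ‖G m s - G l s - (m - l) • V s‖ + (M₁ + M₂) * ρ m) * ‖e s‖ := by
          simp only [ρ]; ring
      _ ≤ ((‖Λ l‖ + 1) * ‖G m s - G l s - (m - l) • V s‖ + (M₁ + M₂) * ρ m) *
          (K * s ^ (δ - 1)) := by gcongr; exact hK s hs
      _ = _ := by ring
  rw [hasDerivAt_iff_isLittleO]
  refine (Asymptotics.IsBigO.of_bound
    (K * (M₁ + M₂) * (gronwallBound 0 ((‖Λ l‖ + 1) * K / δ) 1 (r ^ δ) / δ)) ?_).trans_isLittleO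
    (isLittleO_norm_remainder (F := F →L[ℝ] E →L[ℝ] E) hΛ)
  filter_upwards [hbound] with m hm
  rw [Real.norm_of_nonneg (by positivity)]
  exact hm.trans_eq (by ring)

end SingularLinearODE

section PositiveSolutions

theorem eq_volterraSeries_of_hasDerivAt {E : Type*} [NormedAddCommGroup E] [NormedSpace ℝ E]
    [CompleteSpace E] {B : ℝ → E →L[ℝ] E} {Z : ℝ → E} {C : E} {T : ℝ} (hB : Continuous B)
    (hZ : ∀ t ∈ Ioc 0 T, HasDerivAt Z (B t (Z t)) t) (hZ0 : Tendsto Z (𝓝[>] 0) (𝓝 C))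
    (hT : 0 < T) : Z T = volterraSeries B C T := by
  obtain ⟨K, hK⟩ := isCompact_Icc.exists_bound_of_continuousOn (hB.continuousOn (s := Icc 0 T))
  have hseries : Tendsto (volterraSeries B C) (𝓝[>] 0) (𝓝 C) := by
    have h := continuousOn_volterraSeries C hB T 0 ⟨le_rfl, hT.le⟩
    rw [ContinuousWithinAt, volterraSeries_zero] at h
    exact h.mono_left (nhdsWithin_le_of_mem (Icc_mem_nhdsGT hT))
  have hbound := norm_le_of_norm_deriv_le (K := K) (η := 0)
    (fun t ht => (hZ t ht).sub (hasDerivAt_volterraSeries C hB ht.1))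
    (fun t ht => by
      rw [← map_sub, add_zero]
      exact (B t).le_of_opNorm_le (hK t (Ioc_subset_Icc_self ht)) _)
    (sub_self C ▸ hZ0.sub hseries) (right_mem_Ioc.2 hT)
  rwa [zero_mul, norm_le_zero_iff, Pi.sub_apply, sub_eq_zero] at hbound

theorem IsLinearSolution.nonneg_of_le {E : Type*} [NormedAddCommGroup E] [NormedSpace ℝ E]
    [CompleteSpace E] [PartialOrder E] [IsOrderedAddMonoid E] [IsOrderedModule ℝ E]
    [OrderClosedTopology E] {A : ℝ → E →L[ℝ] E} {X : ℝ → E} (hA : ContinuousOn A (Ioi 0))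
    (hA_nonpos : ∀ r, 0 < r → ∀ x, 0 ≤ x → A r x ≤ 0) (hX : IsLinearSolution A X) {a b : ℝ}
    (ha : 0 < a) (hab : a ≤ b) (hb : 0 ≤ X b) : 0 ≤ X a := by
  rcases hab.eq_or_lt with rfl | hab
  · exact hb
  set B : ℝ → E →L[ℝ] E := fun t => -A (max (b - t) a)
  have hB : Continuous B :=
    (hA.comp_continuous (by fun_prop) fun t => ha.trans_le (le_max_right _ _)).neg
  have hderiv : ∀ t ∈ Ioc 0 (b - a), HasDerivAt (fun t => X (b - t)) (B t (X (b - t))) t := by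
    intro t ht
    have hta : a ≤ b - t := by linarith [ht.2]
    refine ((hX (b - t) (ha.trans_le hta)).scomp t
      ((hasDerivAt_id t).const_sub b)).congr_deriv ?_
    simp only [B, max_eq_left hta, neg_apply, neg_one_smul]
  have hXb : Tendsto (fun t => X (b - t)) (𝓝[>] 0) (𝓝 (X b)) := by
    have h : ContinuousAt (fun t => X (b - t)) 0 :=
      ContinuousAt.comp (by simpa using (hX b (ha.trans hab)).continuousAt) (by fun_prop)
    simpa using h.tendsto.mono_left nhdsWithin_le_nhds
  have hseries := eq_volterraSeries_of_hasDerivAt hB hderiv hXb (sub_pos.2 hab)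
  rw [sub_sub_cancel] at hseries
  rw [hseries]
  exact volterraSeries_nonneg (X b) (fun t _ x hx => by
    simpa only [B, neg_apply, neg_nonneg] using
      hA_nonpos _ (ha.trans_le (le_max_right _ _)) x hx) hb (sub_nonneg.2 hab.le)

variable {ι : Type*} [Fintype ι] {A : ℝ → (ι → ℝ) →L[ℝ] ι → ℝ} {Y : ι → ℝ → ι → ℝ}

theorem IsLinearSolution.linearCombination (hY : ∀ j, IsLinearSolution A (Y j)) (C : ι → ℝ) :
    IsLinearSolution A fun r => Fintype.linearCombination ℝ (fun j => Y j r) C := fun r hr => by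
  simp only [Fintype.linearCombination_apply, map_sum, map_smul]
  exact HasDerivAt.fun_sum fun j _ => (hY j r hr).const_smul (C j)

theorem tendsto_linearCombination_of_tendsto_single [DecidableEq ι] {l : Filter ℝ}
    (hY : ∀ j, Tendsto (Y j) l (𝓝 (Pi.single j 1))) (C : ι → ℝ) :
    Tendsto (fun r => Fintype.linearCombination ℝ (fun j => Y j r) C) l (𝓝 C) := by
  have h : Tendsto (fun r => ∑ j, C j • Y j r) l (𝓝 (∑ j, C j • (Pi.single j 1 : ι → ℝ))) :=
    tendsto_finsetSum _ fun j _ => (hY j).const_smul (C j)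
  rwa [← pi_eq_sum_univ' C] at h

theorem surjective_linearCombination_of_tendsto_single [DecidableEq ι]
    (hA : ContinuousOn A (Ioi 0)) (hY : ∀ j, IsLinearSolution A (Y j))
    (hY0 : ∀ j, Tendsto (Y j) (𝓝[>] 0) (𝓝 (Pi.single j 1))) {R : ℝ} (hR : 0 < R) :
    Function.Surjective (Fintype.linearCombination ℝ fun j => Y j R) := by
  rw [← LinearMap.injective_iff_surjective, injective_iff_map_eq_zero]
  intro C hC
  have hvanish := (IsLinearSolution.linearCombination hY C).eqOn hA
    (isLinearSolution_zero A) hR hC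
  refine tendsto_nhds_unique (tendsto_linearCombination_of_tendsto_single hY0 C)
    (tendsto_const_nhds.congr' ?_)
  filter_upwards [self_mem_nhdsWithin] with r hr using (hvanish hr).symm

variable [Nonempty ι]

theorem exists_mem_stdSimplex_linearCombination_nonneg [DecidableEq ι]
    (hA : ContinuousOn A (Ioi 0)) (hA_nonpos : ∀ r, 0 < r → ∀ x, 0 ≤ x → A r x ≤ 0)
    (hY : ∀ j, IsLinearSolution A (Y j))
    (hY0 : ∀ j, Tendsto (Y j) (𝓝[>] 0) (𝓝 (Pi.single j 1))) {R : ℝ} (hR : 0 < R) :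
    ∃ C ∈ stdSimplex ℝ ι, ∀ r ∈ Ioc 0 R, 0 ≤ Fintype.linearCombination ℝ (fun j => Y j r) C := by
  obtain ⟨C, hC⟩ := surjective_linearCombination_of_tendsto_single hA hY hY0 hR 1
  have hpos : ∀ r ∈ Ioc 0 R, 0 ≤ Fintype.linearCombination ℝ (fun j => Y j r) C := fun r hr =>
    (IsLinearSolution.linearCombination hY C).nonneg_of_le hA hA_nonpos hr.1 hr.2
      (hC.symm ▸ zero_le_one)
  have hC_nonneg : 0 ≤ C := by
    refine ge_of_tendsto (tendsto_linearCombination_of_tendsto_single hY0 C) ?_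
    filter_upwards [Ioc_mem_nhdsGT hR] with r hr using hpos r hr
  have hsum : 0 < ∑ j, C j := by
    refine (Finset.sum_nonneg fun j _ => hC_nonneg j).lt_of_ne' fun h => one_ne_zero (α := ι → ℝ) ?_
    have hC0 : C = 0 := (Fintype.sum_eq_zero_iff_of_nonneg hC_nonneg).1 h
    rw [← hC, hC0, map_zero]
  refine ⟨(∑ j, C j)⁻¹ • C, ⟨fun j => ?_, ?_⟩, fun r hr => ?_⟩
  · exact mul_nonneg (inv_nonneg.2 hsum.le) (hC_nonneg j)
  · simp only [Pi.smul_apply, smul_eq_mul, ← Finset.mul_sum, inv_mul_cancel₀ hsum.ne']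
  · rw [map_smul]
    exact smul_nonneg (inv_nonneg.2 hsum.le) (hpos r hr)

theorem exists_nonneg_isLinearSolution {δ : ℝ} (hδ : 0 < δ) (hA : IsMildlySingular δ A)
    (hA_nonpos : ∀ r, 0 < r → ∀ x, 0 ≤ x → A r x ≤ 0) :
    ∃ X C, IsLinearSolution A X ∧ Tendsto X (𝓝[>] 0) (𝓝 C) ∧ (∀ r, 0 < r → 0 ≤ X r) ∧ C ≠ 0 := by
  classical
  choose Y hY hY0 using fun j : ι => exists_isLinearSolution hδ hA (Pi.single j 1)
  choose c hc hc_nonneg using fun n : ℕ => exists_mem_stdSimplex_linearCombination_nonneg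
    hA.continuousOn hA_nonpos hY hY0 (Nat.cast_add_one_pos (α := ℝ) n)
  obtain ⟨C, hC, φ, hφ, hlim⟩ := (isCompact_stdSimplex ℝ ι).tendsto_subseq hc
  refine ⟨_, C, IsLinearSolution.linearCombination hY C,
    tendsto_linearCombination_of_tendsto_single hY0 C, fun r hr => ?_, ?_⟩
  · have hr_lim := ((Fintype.linearCombination ℝ
      fun j => Y j r).continuous_of_finiteDimensional.tendsto C).comp hlim
    obtain ⟨N, hN⟩ := exists_nat_ge r
    refine ge_of_tendsto hr_lim ?_
    filter_upwards [eventually_ge_atTop N] with n hn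
    have hnφ : (N : ℝ) ≤ φ n := by exact_mod_cast hn.trans (hφ.id_le n)
    exact hc_nonneg (φ n) r ⟨hr, by linarith⟩
  · rintro rfl
    simpa using hC.2

end PositiveSolutions

section RecessiveSolutions

theorem exp_mul_le_exp_mul_of_hasDerivAt {f f' : ℝ → ℝ} {a b c : ℝ} (hab : a ≤ b)
    (hf : ∀ r ∈ Icc a b, HasDerivAt f (f' r) r) (hf' : ∀ r ∈ Icc a b, 0 ≤ f' r + c * f r) :
    exp (c * a) * f a ≤ exp (c * b) * f b := by
  have hderiv : ∀ r ∈ Icc a b, HasDerivAt (fun r => exp (c * r) * f r)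
      (exp (c * r) * (f' r + c * f r)) r := fun r hr =>
    (((hasDerivAt_id r).const_mul c).exp.mul (hf r hr)).congr_deriv (by simp only [id]; ring)
  refine monotoneOn_of_deriv_nonneg (convex_Icc a b)
    (fun r hr => (hderiv r hr).continuousAt.continuousWithinAt)
    (fun r hr => (hderiv r (interior_subset hr)).differentiableAt.differentiableWithinAt)
    (fun r hr => ?_) (left_mem_Icc.2 hab) (right_mem_Icc.2 hab) hab
  rw [(hderiv r (interior_subset hr)).deriv]
  exact mul_nonneg (exp_pos _).le (hf' r (interior_subset hr))

variable {E : Type*} [NormedAddCommGroup E] [NormedSpace ℝ E] {A : ℝ → E →L[ℝ] E} {M : E →L[ℝ] E}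

theorem eventually_nonneg_bilinear_of_tendsto {b : E →L[ℝ] E →L[ℝ] ℝ} {ε : ℝ} (hε : 0 < ε)
    (hA : Tendsto A atTop (𝓝 M)) (hb : ∀ x, ε * ‖x‖ ^ 2 ≤ 2 * b x (M x) + ε * b x x) :
    ∀ᶠ r in atTop, ∀ x, 0 ≤ 2 * b x (A r x) + ε * b x x := by
  have hsmall : Tendsto (fun r => 2 * (‖b‖ * ‖A r - M‖)) atTop (𝓝 0) := by
    simpa using ((tendsto_iff_norm_sub_tendsto_zero.1 hA).const_mul ‖b‖).const_mul 2
  filter_upwards [hsmall.eventually_le_const hε] with r hr x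
  have hpert : |2 * b x ((A r - M) x)| ≤ ε * ‖x‖ ^ 2 :=
    calc |2 * b x ((A r - M) x)| = 2 * ‖b x ((A r - M) x)‖ := by
          rw [abs_mul, abs_two, Real.norm_eq_abs]
      _ ≤ 2 * (‖b‖ * ‖x‖ * (‖A r - M‖ * ‖x‖)) := by
          gcongr
          exact (b.le_opNorm₂ _ _).trans (by gcongr; exact (A r - M).le_opNorm x)
      _ = 2 * (‖b‖ * ‖A r - M‖) * ‖x‖ ^ 2 := by ring
      _ ≤ ε * ‖x‖ ^ 2 := by gcongr
  have hsplit : b x (A r x) = b x (M x) + b x ((A r - M) x) := by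
    rw [← map_add, sub_apply, add_sub_cancel]
  rw [hsplit]
  linarith [(abs_le.1 hpert).1, hb x]

theorem tendsto_exp_mul_bilinear_of_isBigO {b : E →L[ℝ] E →L[ℝ] ℝ} {ε κ : ℝ} (hεκ : ε < 2 * κ)
    {X : ℝ → E} (hX : X =O[atTop] fun r => exp (-κ * r)) :
    Tendsto (fun r => exp (ε * r) * b (X r) (X r)) atTop (𝓝 0) := by
  have hquad : (fun r => b (X r) (X r)) =O[atTop] fun r => exp (-κ * r) * exp (-κ * r) :=
    (Asymptotics.isBigO_of_le' (c := ‖b‖) atTop fun r => by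
      rw [norm_mul, norm_norm, ← mul_assoc]
      exact b.le_opNorm₂ _ _).trans (hX.norm_left.mul hX.norm_left)
  refine ((Asymptotics.isBigO_refl (fun r => exp (ε * r)) atTop).mul hquad).trans_tendsto ?_
  simp only [← exp_add]
  exact tendsto_exp_atBot.comp ((tendsto_id.const_mul_atTop_of_neg
    (by linarith : ε - 2 * κ < 0)).congr fun r => by simp only [id]; ring)

theorem eventually_bilinear_nonpos_of_isBigO {b : E →L[ℝ] E →L[ℝ] ℝ}
    (hb_symm : ∀ x y, b x y = b y x) {ε κ : ℝ} (hε : 0 < ε) (hεκ : ε < 2 * κ)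
    (hA : Tendsto A atTop (𝓝 M)) (hb : ∀ x, ε * ‖x‖ ^ 2 ≤ 2 * b x (M x) + ε * b x x) :
    ∀ᶠ R in atTop, ∀ X, IsLinearSolution A X → (X =O[atTop] fun r => exp (-κ * r)) →
      b (X R) (X R) ≤ 0 := by
  obtain ⟨R₀, hR₀⟩ := eventually_atTop.1 (eventually_nonneg_bilinear_of_tendsto hε hA hb)
  filter_upwards [eventually_ge_atTop R₀, eventually_gt_atTop 0] with R hR hRpos X hX hX_decay
  have hderiv : ∀ r, 0 < r →
      HasDerivAt (fun r => b (X r) (X r)) (2 * b (X r) (A r (X r))) r := fun r hr =>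
    ((b.hasFDerivAt.comp_hasDerivAt r (hX r hr)).clm_apply (hX r hr)).congr_deriv (by
      rw [Function.comp_apply, hb_symm (A r (X r)), two_mul])
  have hmono : ∀ᶠ r in atTop, exp (ε * R) * b (X R) (X R) ≤ exp (ε * r) * b (X r) (X r) := by
    filter_upwards [eventually_ge_atTop R] with r hr
    exact exp_mul_le_exp_mul_of_hasDerivAt hr (fun s hs => hderiv s (hRpos.trans_le hs.1))
      fun s hs => hR₀ s (hR.trans hs.1) (X s)
  exact nonpos_of_mul_nonpos_right
    (ge_of_tendsto (tendsto_exp_mul_bilinear_of_isBigO hεκ hX_decay) hmono) (exp_pos _)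

variable [PartialOrder E] {σ : E →L[ℝ] ℝ} {ν κ : ℝ}

theorem eventually_apply_le_of_tendsto (hκ : κ < ν) (hσ : ∀ x, 0 ≤ x → ‖x‖ ≤ σ x)
    (hA : Tendsto A atTop (𝓝 M)) (hM : ∀ x, σ (M x) = -ν * σ x) :
    ∀ᶠ r in atTop, ∀ x, 0 ≤ x → σ (A r x) ≤ -κ * σ x := by
  have hsmall : Tendsto (fun r => ‖σ‖ * ‖A r - M‖) atTop (𝓝 0) := by
    simpa using (tendsto_iff_norm_sub_tendsto_zero.1 hA).const_mul ‖σ‖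
  filter_upwards [hsmall.eventually_le_const (sub_pos.2 hκ)] with r hr x hx
  have hpert : σ ((A r - M) x) ≤ (ν - κ) * σ x :=
    calc σ ((A r - M) x) ≤ ‖σ ((A r - M) x)‖ := le_norm_self _
      _ ≤ ‖σ‖ * (‖A r - M‖ * ‖x‖) := σ.le_opNorm_of_le ((A r - M).le_opNorm x)
      _ ≤ (ν - κ) * ‖x‖ := by rw [← mul_assoc]; gcongr
      _ ≤ (ν - κ) * σ x := by gcongr; exact hσ x hx
  have hsplit : σ (A r x) = -ν * σ x + σ ((A r - M) x) := by
    rw [← hM, ← map_add, sub_apply, add_sub_cancel]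
  linarith

theorem IsLinearSolution.isBigO_exp_of_nonneg (hκ : κ < ν) (hσ : ∀ x, 0 ≤ x → ‖x‖ ≤ σ x)
    (hA : Tendsto A atTop (𝓝 M)) (hM : ∀ x, σ (M x) = -ν * σ x) {X : ℝ → E}
    (hX : IsLinearSolution A X) (hX_nonneg : ∀ r, 0 < r → 0 ≤ X r) :
    X =O[atTop] fun r => exp (-κ * r) := by
  obtain ⟨R, hR⟩ := eventually_atTop.1 
    ((eventually_apply_le_of_tendsto hκ hσ hA hM).and (eventually_gt_atTop 0))
  have hR0 : 0 < R := (hR R le_rfl).2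
  refine Asymptotics.IsBigO.of_bound (exp (κ * R) * σ (X R)) ?_
  filter_upwards [eventually_ge_atTop R] with r hr
  have hmono := exp_mul_le_exp_mul_of_hasDerivAt (f := fun r => -σ (X r)) (c := κ) hr
    (fun s hs => (σ.hasFDerivAt.comp_hasDerivAt s (hX s (hR0.trans_le hs.1))).neg) fun s hs => by
      linarith [(hR s hs.1).1 (X s) (hX_nonneg s (hR0.trans_le hs.1))]
  have hexp : exp (κ * r) * exp (-κ * r) = 1 := by rw [← exp_add, neg_mul, add_neg_cancel, exp_zero]
  rw [Real.norm_of_nonneg (exp_pos _).le]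
  calc ‖X r‖ ≤ σ (X r) := hσ _ (hX_nonneg r (hR0.trans_le hr))
    _ = exp (κ * r) * σ (X r) * exp (-κ * r) := by rw [mul_right_comm, hexp, one_mul]
    _ ≤ exp (κ * R) * σ (X R) * exp (-κ * r) :=
        mul_le_mul_of_nonneg_right (by linarith) (exp_pos _).le

theorem IsLinearSolution.exists_eqOn_smul_of_isBigO {b : E →L[ℝ] E →L[ℝ] ℝ}
    (hb_symm : ∀ x y, b x y = b y x) {ε : ℝ} (hε : 0 < ε) (hεκ : ε < 2 * κ)
    (hA_cont : ContinuousOn A (Ioi 0)) (hA : Tendsto A atTop (𝓝 M))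
    (hb : ∀ x, ε * ‖x‖ ^ 2 ≤ 2 * b x (M x) + ε * b x x)
    (hσ : ∀ x, 0 ≤ x → ‖x‖ ≤ σ x) (hbσ : ∀ x, σ x = 0 → b x x ≤ 0 → x = 0) {X P : ℝ → E}
    (hX : IsLinearSolution A X) (hP : IsLinearSolution A P)
    (hX_decay : X =O[atTop] fun r => exp (-κ * r)) (hP_decay : P =O[atTop] fun r => exp (-κ * r))
    (hP_nonneg : ∀ r, 0 < r → 0 ≤ P r) (hP_ne : ¬ EqOn P 0 (Ioi 0)) :
    ∃ t : ℝ, EqOn X (t • P) (Ioi 0) := by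
  have hP_pos : ∀ r, 0 < r → σ (P r) ≠ 0 := fun r hr h => hP_ne
    (hP.eqOn hA_cont (isLinearSolution_zero A) hr
      (norm_le_zero_iff.1 ((hσ _ (hP_nonneg r hr)).trans_eq h)))
  obtain ⟨R, hcone, hR⟩ := ((eventually_bilinear_nonpos_of_isBigO hb_symm hε hεκ hA hb).and
    (eventually_gt_atTop 0)).exists
  set t := σ (X R) / σ (P R) with ht
  have hXP : IsLinearSolution A (X - t • P) := hX.sub (hP.const_smul t)
  have hσ_zero : σ ((X - t • P) R) = 0 := by
    rw [Pi.sub_apply, Pi.smul_apply, map_sub, map_smul, smul_eq_mul, ht,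
      div_mul_cancel₀ _ (hP_pos R hR), sub_self]
  have hzero_R := hbσ _ hσ_zero (hcone _ hXP (hX_decay.sub (hP_decay.const_smul_left t)))
  exact ⟨t, hX.eqOn hA_cont (hP.const_smul t) hR (sub_eq_zero.1 hzero_R)⟩

end RecessiveSolutions

section CyclicSystem

/-- The bilinear map `(a, x) ↦ (i ↦ -a i * x (i - 1))`. -/
noncomputable def prevCoupling : (Fin 4 → ℝ) →L[ℝ] (Fin 4 → ℝ) →L[ℝ] Fin 4 → ℝ :=
  -(ContinuousLinearMap.mul ℝ (Fin 4 → ℝ)).bilinearComp (.id ℝ _)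
    (.pi fun i => .proj (i - 1))

/-- The bilinear map `(b, x) ↦ (i ↦ -b (i + 1) * x (i + 1))`. -/
noncomputable def nextCoupling : (Fin 4 → ℝ) →L[ℝ] (Fin 4 → ℝ) →L[ℝ] Fin 4 → ℝ :=
  -(ContinuousLinearMap.mul ℝ (Fin 4 → ℝ)).bilinearComp (.pi fun i => .proj (i + 1))
    (.pi fun i => .proj (i + 1))

theorem prevCoupling_apply (a x : Fin 4 → ℝ) (i : Fin 4) :
    prevCoupling a x i = -(a i * x (i - 1)) := rfl

theorem nextCoupling_apply (b x : Fin 4 → ℝ) (i : Fin 4) :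
    nextCoupling b x i = -(b (i + 1) * x (i + 1)) := rfl

/-- The operator family of the linear system `X i' = -(lam * e i * X (i - 1) + mu * e (i + 1) *
X (i + 1))` with cyclic indices. -/
noncomputable def cyclicCoupling (lam mu : ℝ) : (Fin 4 → ℝ) →L[ℝ] (Fin 4 → ℝ) →L[ℝ] Fin 4 → ℝ :=
  lam • prevCoupling + mu • nextCoupling

theorem cyclicCoupling_apply (lam mu : ℝ) (e x : Fin 4 → ℝ) (i : Fin 4) :
    cyclicCoupling lam mu e x i = -(lam * (e i * x (i - 1)) + mu * (e (i + 1) * x (i + 1))) := by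
  change lam * prevCoupling e x i + mu * nextCoupling e x i = _
  rw [prevCoupling_apply, nextCoupling_apply]
  ring

/-- The sum of the coordinates. -/
noncomputable def coordSum : (Fin 4 → ℝ) →L[ℝ] ℝ := ∑ i, .proj i

/-- The Lorentzian form `∑ i, x i * y i - (∑ i, x i) * (∑ i, y i) / 2`, negative definite along the
diagonal direction. -/
noncomputable def coneForm : (Fin 4 → ℝ) →L[ℝ] (Fin 4 → ℝ) →L[ℝ] ℝ :=
  ∑ i, (ContinuousLinearMap.proj (R := ℝ) (φ := fun _ : Fin 4 => ℝ) i).smulRight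
    (ContinuousLinearMap.proj (R := ℝ) (φ := fun _ : Fin 4 => ℝ) i) -
      (1 / 2 : ℝ) • coordSum.smulRight coordSum

theorem coordSum_apply (x : Fin 4 → ℝ) : coordSum x = ∑ i, x i := by
  simp [coordSum]

theorem coneForm_apply (x y : Fin 4 → ℝ) :
    coneForm x y = ∑ i, x i * y i - (∑ i, x i) * (∑ i, y i) / 2 := by
  simp only [coneForm, one_div, sub_apply, sum_apply, ContinuousLinearMap.smulRight_apply,
    ContinuousLinearMap.proj_apply, smul_apply, coordSum_apply, smul_eq_mul, sub_right_inj]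
  ring

theorem coneForm_comm (x y : Fin 4 → ℝ) : coneForm x y = coneForm y x := by
  simp only [coneForm_apply, mul_comm]

theorem sq_norm_le_sum_sq (x : Fin 4 → ℝ) : ‖x‖ ^ 2 ≤ ∑ i, x i * x i := by
  have hterm : ∀ i, x i * x i ≤ ∑ i, x i * x i := fun i =>
    Finset.single_le_sum (fun j _ => mul_self_nonneg (x j)) (Finset.mem_univ i)
  refine (Real.le_sqrt (norm_nonneg x) (Finset.sum_nonneg fun i _ => mul_self_nonneg _)).1 ?_
  refine (pi_norm_le_iff_of_nonneg (Real.sqrt_nonneg _)).2 fun i =>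
    Real.abs_le_sqrt ((sq (x i)).trans_le (hterm i))

theorem norm_le_coordSum {x : Fin 4 → ℝ} (hx : 0 ≤ x) : ‖x‖ ≤ coordSum x := by
  rw [coordSum_apply]
  refine (pi_norm_le_iff_of_nonneg (Finset.sum_nonneg fun i _ => hx i)).2 fun i => ?_
  rw [Real.norm_of_nonneg (hx i)]
  exact Finset.single_le_sum (fun j _ => hx j) (Finset.mem_univ i)

theorem eq_zero_of_coneForm_nonpos {x : Fin 4 → ℝ} (hσ : coordSum x = 0)
    (hb : coneForm x x ≤ 0) : x = 0 := by
  rw [coordSum_apply] at hσ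
  rw [coneForm_apply, hσ, zero_mul, zero_div, sub_zero] at hb
  exact norm_eq_zero.1 (pow_eq_zero_iff two_ne_zero |>.1
    (((sq_norm_le_sum_sq x).trans hb).antisymm (sq_nonneg _)))

theorem coordSum_cyclicCoupling_one (lam mu : ℝ) (x : Fin 4 → ℝ) :
    coordSum (cyclicCoupling lam mu 1 x) = -(lam + mu) * coordSum x := by
  simp only [coordSum_apply, cyclicCoupling_apply, Pi.one_apply, one_mul, Fin.sum_univ_four,
    Fin.reduceSub, Fin.reduceAdd]
  ring

theorem coneForm_cyclicCoupling_one (lam mu : ℝ) (x : Fin 4 → ℝ) :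
    coneForm x (cyclicCoupling lam mu 1 x) =
      (lam + mu) * ((∑ i, x i) ^ 2 / 2 - (x 0 + x 2) * (x 1 + x 3)) := by
  rw [coneForm_apply, ← coordSum_apply (cyclicCoupling _ _ _ _), coordSum_cyclicCoupling_one,
    coordSum_apply]
  simp only [cyclicCoupling_apply, Pi.one_apply, one_mul, Fin.sum_univ_four, Fin.reduceSub,
    Fin.reduceAdd]
  ring

theorem mul_sq_norm_le_coneForm_cyclicCoupling_one {lam mu ε : ℝ} (hε : 0 ≤ ε)
    (hε' : ε ≤ lam + mu) (x : Fin 4 → ℝ) :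
    ε * ‖x‖ ^ 2 ≤ 2 * coneForm x (cyclicCoupling lam mu 1 x) + ε * coneForm x x := by
  have hamgm : 4 * ((x 0 + x 2) * (x 1 + x 3)) ≤ (∑ i, x i) ^ 2 := by
    rw [Fin.sum_univ_four]
    nlinarith [sq_nonneg ((x 0 + x 2) - (x 1 + x 3))]
  rw [coneForm_cyclicCoupling_one, coneForm_apply]
  nlinarith [mul_le_mul_of_nonneg_left (sq_norm_le_sum_sq x) hε,
    mul_le_mul_of_nonneg_left hamgm (hε.trans hε'),
    mul_le_mul_of_nonneg_right hε' (sq_nonneg (∑ i, x i))]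

variable {lam mu κ : ℝ} {e : ℝ → Fin 4 → ℝ} {X P : ℝ → Fin 4 → ℝ}

theorem isBigO_exp_of_nonneg_of_cyclicCoupling (hκ : κ < lam + mu) (he : Tendsto e atTop (𝓝 1))
    (hP : IsLinearSolution (fun r => cyclicCoupling lam mu (e r)) P)
    (hP_nonneg : ∀ r, 0 < r → 0 ≤ P r) : P =O[atTop] fun r => exp (-κ * r) :=
  hP.isBigO_exp_of_nonneg hκ (fun _ => norm_le_coordSum)
    (((cyclicCoupling lam mu).continuous.tendsto 1).comp he)
    (coordSum_cyclicCoupling_one lam mu) hP_nonneg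

theorem exists_eqOn_smul_of_cyclicCoupling (hκ : 0 < κ) (hκ' : κ < lam + mu)
    (he_cont : ContinuousOn e (Ioi 0)) (he : Tendsto e atTop (𝓝 1))
    (hX : IsLinearSolution (fun r => cyclicCoupling lam mu (e r)) X)
    (hP : IsLinearSolution (fun r => cyclicCoupling lam mu (e r)) P)
    (hX_decay : X =O[atTop] fun r => exp (-κ * r)) (hP_nonneg : ∀ r, 0 < r → 0 ≤ P r)
    (hP_ne : ¬ EqOn P 0 (Ioi 0)) : ∃ t : ℝ, EqOn X (t • P) (Ioi 0) :=
  IsLinearSolution.exists_eqOn_smul_of_isBigO coneForm_comm hκ (by linarith)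
    ((cyclicCoupling lam mu).continuous.comp_continuousOn he_cont)
    (((cyclicCoupling lam mu).continuous.tendsto 1).comp he)
    (mul_sq_norm_le_coneForm_cyclicCoupling_one hκ.le hκ'.le) (fun _ => norm_le_coordSum)
    (fun _ => eq_zero_of_coneForm_nonpos) hX hP hX_decay
    (isBigO_exp_of_nonneg_of_cyclicCoupling hκ' he hP hP_nonneg) hP_nonneg hP_ne

end CyclicSystem

section RadialAsymptotics

theorem lipschitzOnWith_comp_rpow_inv {f f' : ℝ → ℝ} {M ε R : ℝ} (hε : 0 < ε) (hR : 0 < R)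
    (hM : 0 ≤ M) (hf : ∀ r ∈ Ioc 0 R, HasDerivAt f (f' r) r)
    (bound : ∀ r ∈ Ioc 0 R, |f' r| ≤ M * r ^ (ε - 1)) :
    LipschitzOnWith (M / ε).toNNReal (fun u => f (u ^ ε⁻¹)) (Ioc 0 (R ^ ε)) := by
  have hmem : ∀ u ∈ Ioc 0 (R ^ ε), u ^ ε⁻¹ ∈ Ioc 0 R := fun u hu =>
    ⟨rpow_pos_of_pos hu.1 _, (rpow_inv_le_iff_of_pos hu.1.le hR.le hε).2 hu.2⟩
  refine (convex_Ioc _ _).lipschitzOnWith_of_nnnorm_hasDerivWithin_le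
    (fun u hu => ((hf _ (hmem u hu)).comp u
      (hasDerivAt_rpow_const (Or.inl hu.1.ne'))).hasDerivWithinAt) fun u hu => ?_
  have hcancel : (u ^ ε⁻¹) ^ (ε - 1) * (ε⁻¹ * u ^ (ε⁻¹ - 1)) = ε⁻¹ := by
    have hexp : ε⁻¹ * (ε - 1) + (ε⁻¹ - 1) = 0 := by field_simp; ring
    rw [← rpow_mul hu.1.le, mul_left_comm, ← rpow_add hu.1, hexp, rpow_zero, mul_one]
  have hpos : 0 ≤ ε⁻¹ * u ^ (ε⁻¹ - 1) := by have := hu.1; positivity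
  rw [← NNReal.coe_le_coe, coe_nnnorm, coe_toNNReal _ (by positivity), norm_mul,
    Real.norm_of_nonneg hpos]
  calc ‖f' (u ^ ε⁻¹)‖ * (ε⁻¹ * u ^ (ε⁻¹ - 1))
      ≤ M * (u ^ ε⁻¹) ^ (ε - 1) * (ε⁻¹ * u ^ (ε⁻¹ - 1)) :=
        mul_le_mul_of_nonneg_right (bound _ (hmem u hu)) hpos
    _ = M / ε := by rw [mul_assoc, hcancel, div_eq_mul_inv]

theorem exists_tendsto_of_abs_deriv_le_rpow {f f' : ℝ → ℝ} {M ε R : ℝ} (hε : 0 < ε) (hR : 0 < R)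
    (hf : ∀ r ∈ Ioc 0 R, HasDerivAt f (f' r) r) (bound : ∀ r ∈ Ioc 0 R, |f' r| ≤ M * r ^ (ε - 1)) :
    ∃ l, Tendsto f (𝓝[>] 0) (𝓝 l) ∧ ∀ r ∈ Ioc 0 R, |f r - l| ≤ M / ε * r ^ ε := by
  have hM : 0 ≤ M := nonneg_of_mul_nonneg_left ((abs_nonneg _).trans (bound R ⟨hR, le_rfl⟩))
    (rpow_pos_of_pos hR _)
  obtain ⟨g, hg, hfg⟩ := (lipschitzOnWith_comp_rpow_inv hε hR hM hf bound).extend_real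
  have heq : ∀ r ∈ Ioc 0 R, g (r ^ ε) = f r := fun r hr => by
    rw [← hfg ⟨rpow_pos_of_pos hr.1 _, rpow_le_rpow hr.1.le hr.2 hε.le⟩]
    simp only [rpow_rpow_inv hr.1.le hε.ne']
  refine ⟨g 0, ?_, fun r hr => ?_⟩
  · refine ((hg.continuous.tendsto 0).comp
      ((tendsto_rpow_nhdsGT_zero hε).mono_right nhdsWithin_le_nhds)).congr' ?_
    filter_upwards [Ioc_mem_nhdsGT hR] with r hr using heq r hr
  · have := hg.dist_le_mul (r ^ ε) 0
    rwa [heq r hr, Real.dist_eq, Real.dist_eq, sub_zero, coe_toNNReal _ (by positivity),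
      abs_of_nonneg (rpow_nonneg hr.1.le _)] at this

theorem tendsto_div_log_of_tendsto_sub {u : ℝ → ℝ} {γ L : ℝ}
    (hL : Tendsto (fun r => u r - γ * log r) (𝓝[>] 0) (𝓝 L)) :
    Tendsto (fun r => u r / log r) (𝓝[>] 0) (𝓝 γ) := by
  have hinv : Tendsto (fun r => (log r)⁻¹) (𝓝[>] 0) (𝓝 0) :=
    tendsto_inv_atBot_zero.comp tendsto_log_nhdsGT_zero
  have hquot : Tendsto (fun r => (u r - γ * log r) * (log r)⁻¹ + γ) (𝓝[>] 0) (𝓝 γ) := by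
    simpa using (hL.mul hinv).add_const γ
  refine hquot.congr' ?_
  filter_upwards [Ioo_mem_nhdsGT one_pos] with r hr
  have := (log_neg hr.1 hr.2).ne
  field_simp
  ring

variable {u v g : ℝ → ℝ}

theorem exists_tendsto_sub_log_of_radial {γ M ε R : ℝ} (hε : 0 < ε) (hR : 0 < R)
    (hu : ∀ r, 0 < r → HasDerivAt u (r⁻¹ * v r) r) (hv : ∀ r, 0 < r → HasDerivAt v (g r) r)
    (hg : ∀ r ∈ Ioc 0 R, |g r| ≤ M * r ^ (ε - 1))
    (hγ : Tendsto (fun r => 2 * u r / log r) (𝓝[>] 0) (𝓝 γ)) :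
    Tendsto v (𝓝[>] 0) (𝓝 (γ / 2)) ∧
      ∃ L, Tendsto (fun r => 2 * u r - γ * log r) (𝓝[>] 0) (𝓝 L) := by
  obtain ⟨V, hV, hVv⟩ := exists_tendsto_of_abs_deriv_le_rpow hε hR (fun r hr => hv r hr.1) hg
  have hderiv : ∀ r ∈ Ioc 0 R, HasDerivAt (fun r => 2 * u r - 2 * V * log r)
      (2 * (r⁻¹ * v r) - 2 * V * r⁻¹) r := fun r hr =>
    ((hu r hr.1).const_mul 2).sub ((hasDerivAt_log hr.1.ne').const_mul (2 * V))
  have hbound : ∀ r ∈ Ioc 0 R,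
      |2 * (r⁻¹ * v r) - 2 * V * r⁻¹| ≤ 2 * (M / ε) * r ^ (ε - 1) := fun r hr => by
    calc |2 * (r⁻¹ * v r) - 2 * V * r⁻¹| = 2 * |v r - V| * r⁻¹ := by
          rw [← abs_of_pos (inv_pos.2 hr.1), ← abs_two, ← abs_mul, ← abs_mul, abs_two,
            abs_of_pos (inv_pos.2 hr.1)]
          congr 1
          ring
      _ ≤ 2 * (M / ε * r ^ ε) * r⁻¹ := by
          have := hVv r hr
          have := hr.1
          gcongr
      _ = 2 * (M / ε) * r ^ (ε - 1) := by rw [rpow_sub_one hr.1.ne']; ring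
  obtain ⟨L, hL, -⟩ := exists_tendsto_of_abs_deriv_le_rpow hε hR hderiv hbound
  obtain rfl := tendsto_nhds_unique hγ (tendsto_div_log_of_tendsto_sub hL)
  exact ⟨by simpa using hV, L, hL⟩

theorem eventually_exp_le_rpow_of_tendsto_div_log {h : ℝ → ℝ} {c p : ℝ} (hpc : p < c)
    (hlim : Tendsto (fun r => h r / log r) (𝓝[>] 0) (𝓝 c)) :
    ∀ᶠ r in 𝓝[>] 0, exp (h r) ≤ r ^ p := by
  filter_upwards [hlim.eventually_const_lt hpc, Ioo_mem_nhdsGT one_pos] with r hlt hr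
  rw [lt_div_iff_of_neg (log_neg hr.1 hr.2)] at hlt
  rw [rpow_def_of_pos hr.1, mul_comm (log r)]
  exact exp_le_exp.2 hlt.le

theorem exists_abs_le_of_radial (hu : ∀ r, 0 < r → HasDerivAt u (r⁻¹ * v r) r) {r : ℝ} (hr : 1 ≤ r)
    {B : ℝ} (hB : |u r| ≤ B) (hB' : |u (r + 1)| ≤ B) : ∃ ξ ∈ Icc r (r + 1), |v ξ| ≤ 4 * B * r := by
  have hpos : ∀ x, r ≤ x → 0 < x := fun x hx => by linarith
  obtain ⟨ξ, hξ, hslope⟩ := exists_hasDerivAt_eq_slope u (fun r => r⁻¹ * v r) (lt_add_one r)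
    (fun x hx => (hu x (hpos x hx.1)).continuousAt.continuousWithinAt)
    (fun x hx => hu x (hpos x hx.1.le))
  have hξ0 : 0 < ξ := hpos ξ hξ.1.le
  rw [add_sub_cancel_left, div_one, inv_mul_eq_iff_eq_mul₀ hξ0.ne'] at hslope
  refine ⟨ξ, Ioo_subset_Icc_self hξ, ?_⟩
  have hB0 : 0 ≤ B := (abs_nonneg _).trans hB
  calc |v ξ| = ξ * |u (r + 1) - u r| := by rw [hslope, abs_mul, abs_of_pos hξ0]
    _ ≤ (2 * r) * (2 * B) := by
        gcongr
        · linarith [hξ.2]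
        · linarith [abs_sub (u (r + 1)) (u r)]
    _ = 4 * B * r := by ring

theorem isBigO_id_atTop_of_radial (hu : ∀ r, 0 < r → HasDerivAt u (r⁻¹ * v r) r)
    (hv : ∀ r, 0 < r → HasDerivAt v (g r) r) (hinf : Tendsto u atTop (𝓝 0))
    (hg : g =O[atTop] id) : v =O[atTop] (id : ℝ → ℝ) := by
  obtain ⟨M, hM, hgM⟩ := hg.exists_nonneg
  obtain ⟨R₀, hgR⟩ := eventually_atTop.1 hgM.bound
  have hsmall : ∀ᶠ r in atTop, |u r| ≤ 1 :=
    (by simpa using hinf.abs : Tendsto (fun r => |u r|) atTop (𝓝 0)).eventually_le_const one_pos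
  obtain ⟨R₁, huR⟩ := eventually_atTop.1 hsmall
  refine .of_bound (4 + 2 * M) ?_
  filter_upwards [eventually_ge_atTop R₀, eventually_ge_atTop R₁, eventually_ge_atTop 1]
    with r hr₀ hr₁ hr
  obtain ⟨ξ, hξ, hvξ⟩ := exists_abs_le_of_radial hu hr (huR r hr₁) (huR (r + 1) (by linarith))
  have hvar : ‖v r - v ξ‖ ≤ M * (r + 1) * ‖r - ξ‖ :=
    (convex_Icc r (r + 1)).norm_image_sub_le_of_norm_hasDerivWithin_le
      (fun x hx => (hv x (by linarith [hx.1])).hasDerivWithinAt)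
      (fun x hx => (hgR x (hr₀.trans hx.1)).trans <| by
        rw [id, Real.norm_of_nonneg (by linarith [hx.1])]
        gcongr
        exact hx.2) hξ ⟨le_rfl, (lt_add_one r).le⟩
  have hdist : ‖r - ξ‖ ≤ 1 := abs_le.2 ⟨by linarith [hξ.2], by linarith [hξ.1]⟩
  rw [id, Real.norm_of_nonneg (by linarith : 0 ≤ r)]
  calc ‖v r‖ ≤ ‖v ξ‖ + ‖v r - v ξ‖ := by simpa using norm_add_le (v ξ) (v r - v ξ)
    _ ≤ 4 * 1 * r + M * (r + r) * 1 := by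
        gcongr
        · exact hvξ
        · exact hvar.trans (by gcongr)
    _ = (4 + 2 * M) * r := by ring

end RadialAsymptotics

section TodaSystem

/-- The ratios `exp (x i) / exp (x (i - 1))` of cyclically consecutive exponentials. -/
noncomputable def expDiff (x : Fin 4 → ℝ) : Fin 4 → ℝ := fun i => exp (x i - x (i - 1))

/-- The exponents `a i` for which `expDiff (w r) i` is of order `r ^ (a i - 1)` when `w r` is of
order `(log r / 2) • γ`. -/
noncomputable def singularExponent (γ : Fin 4 → ℝ) : Fin 4 → ℝ := fun i => 1 + (γ i - γ (i - 1)) / 2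

/-- The radial affine Toda system `(r d/dr)² w i = 2 r² (e i ^ 2 - e (i + 1) ^ 2)` on `(0, ∞)`,
where `e = expDiff w`, as a first-order system for `w` and `v = r w'`, with `w → 0` at infinity. -/
structure IsTodaSolution (w v : ℝ → Fin 4 → ℝ) : Prop where
  hasDerivAt : ∀ r, 0 < r → HasDerivAt w (r⁻¹ • v r) r
  hasDerivAt_velocity : ∀ r, 0 < r →
    HasDerivAt v (fun i => 2 * r * (expDiff (w r) i ^ 2 - expDiff (w r) (i + 1) ^ 2)) r
  tendsto_atTop : Tendsto w atTop (𝓝 0)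

/-- A Toda solution with `2 w i = γ i * log r + L i + o(1)` at `0` for generic data `γ`. -/
structure HasFineStructure (γ L : Fin 4 → ℝ) (w v : ℝ → Fin 4 → ℝ) : Prop
    extends IsTodaSolution w v where
  exponent_pos : ∀ i, 0 < singularExponent γ i
  tendsto_velocity : Tendsto v (𝓝[>] 0) (𝓝 ((1 / 2 : ℝ) • γ))
  tendsto_sub_log : ∀ i, Tendsto (fun r => 2 * w r i - γ i * log r) (𝓝[>] 0) (𝓝 (L i))

theorem continuous_expDiff : Continuous expDiff := by
  unfold expDiff
  fun_prop

theorem expDiff_pos (x : Fin 4 → ℝ) (i : Fin 4) : 0 < expDiff x i := exp_pos _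

variable {w v : ℝ → Fin 4 → ℝ} {γ L : Fin 4 → ℝ} {δ : ℝ}

namespace IsTodaSolution

theorem continuousOn_expDiff (h : IsTodaSolution w v) :
    ContinuousOn (fun r => expDiff (w r)) (Ioi 0) := fun r hr =>
  (continuous_expDiff.continuousAt.comp (h.hasDerivAt r hr).continuousAt).continuousWithinAt

theorem tendsto_expDiff_atTop (h : IsTodaSolution w v) :
    Tendsto (fun r => expDiff (w r)) atTop (𝓝 1) := by
  have h0 : expDiff 0 = 1 := funext fun i => by simp [expDiff]
  exact h0 ▸ (continuous_expDiff.tendsto 0).comp h.tendsto_atTop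

theorem hasDerivAt_expDiff (h : IsTodaSolution w v) {r : ℝ} (hr : 0 < r) :
    HasDerivAt (fun r => expDiff (w r))
      (fun i => expDiff (w r) i * (r⁻¹ * v r i - r⁻¹ * v r (i - 1))) r :=
  hasDerivAt_pi.2 fun i =>
    ((hasDerivAt_pi.1 (h.hasDerivAt r hr) i).sub (hasDerivAt_pi.1 (h.hasDerivAt r hr) (i - 1))).exp

theorem isMildlySingular_expDiff (h : IsTodaSolution w v)
    (hγ : ∀ i, Tendsto (fun r => 2 * w r i / log r) (𝓝[>] 0) (𝓝 (γ i)))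
    (hδ : ∀ i, δ < singularExponent γ i) : IsMildlySingular δ fun r => expDiff (w r) := by
  have hlim : ∀ i, Tendsto (fun r => (w r i - w r (i - 1)) / log r) (𝓝[>] 0)
      (𝓝 (singularExponent γ i - 1)) := fun i => by
    have := ((hγ i).sub (hγ (i - 1))).div_const 2
    rw [singularExponent, add_sub_cancel_left]
    exact this.congr fun r => by ring
  have hnear : ∀ᶠ r in 𝓝[>] 0, ‖r ^ (1 - δ) • expDiff (w r)‖ ≤ 1 := by
    filter_upwards [eventually_all.2 fun i => eventually_exp_le_rpow_of_tendsto_div_log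
      (sub_lt_sub_right (hδ i) 1) (hlim i), self_mem_nhdsWithin] with r hexp (hr : 0 < r)
    refine (pi_norm_le_iff_of_nonneg zero_le_one).2 fun i => ?_
    rw [Pi.smul_apply, smul_eq_mul,
      Real.norm_of_nonneg (mul_nonneg (rpow_nonneg hr.le _) (expDiff_pos _ _).le)]
    calc r ^ (1 - δ) * expDiff (w r) i ≤ r ^ (1 - δ) * r ^ (δ - 1) := by gcongr; exact hexp i
      _ = 1 := by rw [← rpow_add hr, sub_add_sub_cancel', sub_self, rpow_zero]
  have hcont : ContinuousOn (fun r => r ^ (1 - δ) • expDiff (w r)) (Ioi 0) :=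
    (continuousOn_id.rpow_const fun r (hr : 0 < r) => Or.inl hr.ne').smul h.continuousOn_expDiff
  refine ⟨h.continuousOn_expDiff, fun R => ?_⟩
  obtain ⟨K, -, hK⟩ := exists_norm_le_on_Ioc_of_eventually hcont hnear R
  refine ⟨K, fun r hr => ?_⟩
  have hKr := hK r hr
  rwa [norm_smul, Real.norm_of_nonneg (rpow_nonneg hr.1.le _), mul_comm, ← le_div_iff₀
    (rpow_pos_of_pos hr.1 _), div_eq_mul_inv, ← rpow_neg hr.1.le, neg_sub] at hKr

theorem abs_velocity_deriv_le {r : ℝ} (hr : 0 ≤ r) (i : Fin 4) :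
    |2 * r * (expDiff (w r) i ^ 2 - expDiff (w r) (i + 1) ^ 2)| ≤ 2 * r * ‖expDiff (w r)‖ ^ 2 := by
  have hsq : ∀ j, expDiff (w r) j ^ 2 ≤ ‖expDiff (w r)‖ ^ 2 := fun j =>
    sq_le_sq.2 (by simpa using norm_le_pi_norm (expDiff (w r)) j)
  rw [abs_mul, abs_of_nonneg (by positivity : 0 ≤ 2 * r)]
  gcongr
  exact abs_le.2 ⟨by nlinarith [hsq (i + 1)], by nlinarith [hsq i]⟩

theorem hasFineStructure (h : IsTodaSolution w v) (ha : ∀ i, 0 < singularExponent γ i)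
    (hγ : ∀ i, Tendsto (fun r => 2 * w r i / log r) (𝓝[>] 0) (𝓝 (γ i))) :
    ∃ L, HasFineStructure γ L w v := by
  obtain ⟨δ, hδ, hδa⟩ := Pi.exists_forall_pos_add_lt ha
  obtain ⟨K, hK⟩ := (h.isMildlySingular_expDiff hγ (by simpa using hδa)).exists_norm_le 1
  have hbound : ∀ i, ∀ r ∈ Ioc (0 : ℝ) 1,
      |2 * r * (expDiff (w r) i ^ 2 - expDiff (w r) (i + 1) ^ 2)| ≤
        2 * K ^ 2 * r ^ (2 * δ - 1) := fun i r hr => by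
    calc _ ≤ 2 * r * ‖expDiff (w r)‖ ^ 2 := abs_velocity_deriv_le hr.1.le i
      _ ≤ 2 * r * (K * r ^ (δ - 1)) ^ 2 := by have := hr.1; gcongr; exact hK r hr
      _ = 2 * K ^ 2 * r ^ (2 * δ - 1) := by
        rw [mul_pow, ← rpow_mul_natCast hr.1.le, show 2 * δ - 1 = (δ - 1) * (2 : ℕ) + 1 by
          push_cast; ring, rpow_add_one hr.1.ne']
        ring
  choose hv L hL using fun i => exists_tendsto_sub_log_of_radial (by positivity : 0 < 2 * δ) one_pos
    (fun r hr => hasDerivAt_pi.1 (h.hasDerivAt r hr) i)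
    (fun r hr => hasDerivAt_pi.1 (h.hasDerivAt_velocity r hr) i) (hbound i) (hγ i)
  refine ⟨L, h, ha, tendsto_pi_nhds.2 fun i => ?_, hL⟩
  simpa [div_eq_inv_mul] using hv i

theorem isBigO_velocity (h : IsTodaSolution w v) : v =O[atTop] (id : ℝ → ℝ) := by
  have hbdd : (fun r => ‖expDiff (w r)‖ ^ 2) =O[atTop] fun _ => (1 : ℝ) :=
    (h.tendsto_expDiff_atTop.norm.pow 2).isBigO_one ℝ
  refine Asymptotics.isBigO_pi.2 fun i => isBigO_id_atTop_of_radial (u := fun r => w r i)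
    (fun r hr => hasDerivAt_pi.1 (h.hasDerivAt r hr) i)
    (fun r hr => hasDerivAt_pi.1 (h.hasDerivAt_velocity r hr) i)
    (tendsto_pi_nhds.1 h.tendsto_atTop i) ?_
  refine (Asymptotics.IsBigO.of_bound 2 ?_ : _ =O[atTop] fun r => r * ‖expDiff (w r)‖ ^ 2).trans
    (((Asymptotics.isBigO_refl (id : ℝ → ℝ) atTop).mul hbdd).congr_right fun r => mul_one r)
  filter_upwards [eventually_ge_atTop 0] with r hr
  rw [Real.norm_eq_abs, Real.norm_of_nonneg (by positivity), ← mul_assoc]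
  exact abs_velocity_deriv_le hr i

end IsTodaSolution

namespace HasFineStructure

theorem exists_isMildlySingular_expDiff (h : HasFineStructure γ L w v) :
    ∃ δ, 0 < δ ∧ (∀ i, δ < singularExponent γ i) ∧ IsMildlySingular δ fun r => expDiff (w r) := by
  obtain ⟨δ, hδ, hδa⟩ := Pi.exists_forall_pos_add_lt h.exponent_pos
  simp only [zero_add] at hδa
  exact ⟨δ, hδ, hδa, h.isMildlySingular_expDiff
    (fun i => tendsto_div_log_of_tendsto_sub (h.tendsto_sub_log i)) hδa⟩

theorem tendsto_rpow_mul_expDiff (h : HasFineStructure γ L w v) (i : Fin 4) :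
    Tendsto (fun r => r ^ (1 - singularExponent γ i) * expDiff (w r) i) (𝓝[>] 0)
      (𝓝 (expDiff ((1 / 2 : ℝ) • L) i)) := by
  have hlim := (((h.tendsto_sub_log i).sub (h.tendsto_sub_log (i - 1))).div_const 2).rexp
  convert hlim.congr' ?_ using 2
  · simp only [expDiff, Pi.smul_apply, smul_eq_mul]
    ring_nf
  · filter_upwards [self_mem_nhdsWithin] with r (hr : 0 < r)
    rw [rpow_def_of_pos hr, expDiff, ← exp_add, singularExponent]
    ring_nf

end HasFineStructure

/-- The embedding of `(x, y)` as the skew-palindrome `(x, y, -y, -x)`. -/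
def skewPalindrome (x y : ℝ) : Fin 4 → ℝ := ![x, y, -y, -x]

theorem skewPalindrome_rev (x y : ℝ) (i : Fin 4) :
    skewPalindrome x y i.rev = -skewPalindrome x y i := by
  fin_cases i <;> simp [skewPalindrome, Fin.rev]

theorem expDiff_skewPalindrome_sq (x y : ℝ) (i : Fin 4) :
    expDiff (skewPalindrome x y) i ^ 2 =
      ![exp (4 * x), exp (2 * y - 2 * x), exp (-(4 * y)), exp (2 * y - 2 * x)] i := by
  rw [expDiff, ← exp_nat_mul]
  fin_cases i <;> simp [skewPalindrome] <;> ring_nf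

theorem hasDerivAt_skewPalindrome {f g : ℝ → ℝ} {f' g' r : ℝ} (hf : HasDerivAt f f' r)
    (hg : HasDerivAt g g' r) :
    HasDerivAt (fun r => skewPalindrome (f r) (g r)) (skewPalindrome f' g') r :=
  hasDerivAt_pi.2 fun i => by
    fin_cases i
    exacts [hf, hg, hg.neg, hf.neg]

theorem tendsto_skewPalindrome_apply {l : Filter ℝ} {f g : ℝ → ℝ} {x y : ℝ}
    (hf : Tendsto f l (𝓝 x)) (hg : Tendsto g l (𝓝 y)) (i : Fin 4) :
    Tendsto (fun r => skewPalindrome (f r) (g r) i) l (𝓝 (skewPalindrome x y i)) := by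
  fin_cases i
  exacts [hf, hg, hg.neg, hf.neg]

theorem hasDerivAt_of_contDiffOn {u : ℝ → ℝ} (hu : ContDiffOn ℝ 2 u (Ioi 0)) {r : ℝ} (hr : 0 < r) :
    HasDerivAt u (deriv u r) r ∧ HasDerivAt (deriv u) (deriv (deriv u) r) r := by
  have hu' : ContDiffOn ℝ 1 (deriv u) (Ioi 0) := hu.deriv_of_isOpen isOpen_Ioi le_rfl
  have hr' : Ioi 0 ∈ 𝓝 r := Ioi_mem_nhds hr
  exact ⟨((hu.contDiffAt hr').differentiableAt two_ne_zero).hasDerivAt,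
    ((hu'.contDiffAt hr').differentiableAt one_ne_zero).hasDerivAt⟩

theorem hasDerivAt_mul_deriv {u : ℝ → ℝ} (hu : ContDiffOn ℝ 2 u (Ioi 0)) {r f : ℝ} (hr : 0 < r)
    (hf : (1 / 2) * deriv (deriv u) r + (1 / (2 * r)) * deriv u r = f) :
    HasDerivAt (fun r => r * deriv u r) (2 * r * f) r := by
  refine ((hasDerivAt_id r).mul (hasDerivAt_of_contDiffOn hu hr).2).congr_deriv ?_
  rw [← hf, id]
  field_simp
  ring

theorem IsRadialTTStar.isTodaSolution {w0 w1 : ℝ → ℝ} (hsol : IsRadialTTStar w0 w1)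
    (h0 : ContDiffOn ℝ 2 w0 (Ioi 0)) (h1 : ContDiffOn ℝ 2 w1 (Ioi 0))
    (hlim0 : Tendsto w0 atTop (𝓝 0)) (hlim1 : Tendsto w1 atTop (𝓝 0)) :
    IsTodaSolution (fun r => skewPalindrome (w0 r) (w1 r))
      (fun r => skewPalindrome (r * deriv w0 r) (r * deriv w1 r)) where
  hasDerivAt r hr := by
    refine (hasDerivAt_skewPalindrome (hasDerivAt_of_contDiffOn h0 hr).1
      (hasDerivAt_of_contDiffOn h1 hr).1).congr_deriv (funext fun i => ?_)
    fin_cases i <;> simp [skewPalindrome, hr.ne']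
  hasDerivAt_velocity r hr := by
    refine (hasDerivAt_skewPalindrome (hasDerivAt_mul_deriv h0 hr (hsol r hr).1)
      (hasDerivAt_mul_deriv h1 hr (hsol r hr).2)).congr_deriv (funext fun i => ?_)
    simp only [expDiff_skewPalindrome_sq]
    fin_cases i <;> simp [skewPalindrome] <;> ring
  tendsto_atTop := tendsto_pi_nhds.2 fun i => by
    convert tendsto_skewPalindrome_apply hlim0 hlim1 i using 2
    fin_cases i <;> simp [skewPalindrome]

end TodaSystem

section SpectralFlow

theorem IsMildlySingular.clm_apply {F F' : Type*} [NormedAddCommGroup F] [NormedSpace ℝ F]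
    [NormedAddCommGroup F'] [NormedSpace ℝ F'] {δ : ℝ} {f : ℝ → F} (hf : IsMildlySingular δ f)
    (T : F →L[ℝ] F') : IsMildlySingular δ fun r => T (f r) where
  continuousOn := T.continuous.comp_continuousOn hf.continuousOn
  exists_norm_le R := by
    obtain ⟨K, hK⟩ := hf.exists_norm_le R
    refine ⟨‖T‖ * K, fun r hr => (T.le_opNorm _).trans ?_⟩
    rw [mul_assoc]
    exact mul_le_mul_of_nonneg_left (hK r hr) (norm_nonneg _)

theorem IsMildlySingular.tendsto_smul {F : Type*} [NormedAddCommGroup F] [NormedSpace ℝ F]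
    {δ : ℝ} (hδ : 0 < δ) {f : ℝ → F} (hf : IsMildlySingular δ f) :
    Tendsto (fun r => r • f r) (𝓝[>] 0) (𝓝 0) := by
  obtain ⟨K, hK⟩ := hf.exists_norm_le 1
  have hlim : Tendsto (fun r : ℝ => K * r ^ δ) (𝓝[>] 0) (𝓝 0) := by
    simpa using ((tendsto_rpow_nhdsGT_zero hδ).mono_right nhdsWithin_le_nhds).const_mul K
  refine squeeze_zero_norm' ?_ hlim
  filter_upwards [Ioc_mem_nhdsGT one_pos] with r hr
  have hr0 := hr.1
  calc ‖r • f r‖ = r * ‖f r‖ := by rw [norm_smul, Real.norm_of_nonneg hr0.le]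
    _ ≤ r * (K * r ^ (δ - 1)) := by gcongr; exact hK r hr
    _ = K * r ^ δ := by rw [rpow_sub_one hr0.ne']; field_simp

/-- The operators of the linear systems
`X i' = -(p i * e i * X (i - 1)) - q (i + 1) * e (i + 1) * X (i + 1)`, as functions of `e`. -/
noncomputable def weightedCoupling (p q : Fin 4 → ℝ) :
    (Fin 4 → ℝ) →L[ℝ] (Fin 4 → ℝ) →L[ℝ] Fin 4 → ℝ :=
  prevCoupling.comp (ContinuousLinearMap.mul ℝ (Fin 4 → ℝ) p) +
    nextCoupling.comp (ContinuousLinearMap.mul ℝ (Fin 4 → ℝ) q)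

theorem weightedCoupling_apply (p q e x : Fin 4 → ℝ) (i : Fin 4) :
    weightedCoupling p q e x i =
      -(p i * e i * x (i - 1)) - q (i + 1) * e (i + 1) * x (i + 1) := by
  rw [sub_eq_add_neg]
  rfl

theorem hasDerivAt_comp_mul {R F : Type*} [NormedRing R] [NormedAlgebra ℝ R]
    [NormedAddCommGroup F] [NormedSpace ℝ F] (B : R →L[ℝ] F) {c : ℝ → R} {c' : R} {l : ℝ}
    (hc : HasDerivAt c c' l) :
    HasDerivAt (fun m => B.comp (ContinuousLinearMap.mul ℝ R (c m)))
      (B.comp (ContinuousLinearMap.mul ℝ R c')) l :=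
  ((ContinuousLinearMap.compL ℝ R R F B).comp
    (ContinuousLinearMap.mul ℝ R)).hasFDerivAt.comp_hasDerivAt l hc

theorem hasDerivAt_weightedCoupling {p q : ℝ → Fin 4 → ℝ} {p' q' : Fin 4 → ℝ} {l : ℝ}
    (hp : HasDerivAt p p' l) (hq : HasDerivAt q q' l) :
    HasDerivAt (fun m => weightedCoupling (p m) (q m)) (weightedCoupling p' q') l :=
  HasDerivAt.add (hasDerivAt_comp_mul prevCoupling hp) (hasDerivAt_comp_mul nextCoupling hq)

/-- The coupling of the linear system with spectral parameter `l`. -/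
noncomputable def spectralCoupling (a : Fin 4 → ℝ) (l : ℝ) :
    (Fin 4 → ℝ) →L[ℝ] (Fin 4 → ℝ) →L[ℝ] Fin 4 → ℝ :=
  weightedCoupling (fun i => exp (a i * l)) fun i => exp (-(a i * l))

/-- The derivative of `spectralCoupling a` with respect to the spectral parameter. -/
noncomputable def spectralCouplingDeriv (a : Fin 4 → ℝ) (l : ℝ) :
    (Fin 4 → ℝ) →L[ℝ] (Fin 4 → ℝ) →L[ℝ] Fin 4 → ℝ :=
  weightedCoupling (fun i => exp (a i * l) * a i) fun i => exp (-(a i * l)) * -a i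

theorem hasDerivAt_spectralCoupling (a : Fin 4 → ℝ) (l : ℝ) :
    HasDerivAt (spectralCoupling a) (spectralCouplingDeriv a l) l := by
  have hlin : ∀ i, HasDerivAt (fun m => a i * m) (a i) l := fun i => by
    simpa using (hasDerivAt_id l).const_mul (a i)
  exact hasDerivAt_weightedCoupling (hasDerivAt_pi.2 fun i => (hlin i).exp)
    (hasDerivAt_pi.2 fun i => (hlin i).neg.exp)

/-- The right-hand side of the linear equation in `l` which is compatible with the linear system
of `spectralCoupling` along a Toda solution. -/
noncomputable def isomonodromyField (γ : Fin 4 → ℝ) (w v : ℝ → Fin 4 → ℝ) (l r : ℝ)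
    (x : Fin 4 → ℝ) : Fin 4 → ℝ := fun i =>
  (γ i / 2 - v r i) * x i + r *
    (exp (-(singularExponent γ (i + 1) * l)) * expDiff (w r) (i + 1) * x (i + 1) -
      exp (singularExponent γ i * l) * expDiff (w r) i * x (i - 1))

variable {w v : ℝ → Fin 4 → ℝ} {γ L C : Fin 4 → ℝ} {X : ℝ → Fin 4 → ℝ} {l : ℝ}

theorem IsTodaSolution.hasDerivAt_isomonodromyField (h : IsTodaSolution w v)
    (hX : IsLinearSolution (fun r => spectralCoupling (singularExponent γ) l (expDiff (w r))) X)
    {r : ℝ} (hr : 0 < r) :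
    HasDerivAt (fun r => isomonodromyField γ w v l r (X r))
      (spectralCoupling (singularExponent γ) l (expDiff (w r)) (isomonodromyField γ w v l r (X r)) +
        spectralCouplingDeriv (singularExponent γ) l (expDiff (w r)) (X r)) r := by
  refine hasDerivAt_pi.2 fun i => ?_
  have hX' := hasDerivAt_pi.1 (hX r hr)
  have he := hasDerivAt_pi.1 (h.hasDerivAt_expDiff hr)
  have hv := hasDerivAt_pi.1 (h.hasDerivAt_velocity r hr) i
  refine (((hv.const_sub (γ i / 2)).mul (hX' i)).add ((hasDerivAt_id r).mul
    ((((he (i + 1)).const_mul _).mul (hX' (i + 1))).sub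
      (((he i).const_mul _).mul (hX' (i - 1)))))).congr_deriv ?_
  have hexp : ∀ j, singularExponent γ j = 1 + (γ j - γ (j - 1)) / 2 := fun j => rfl
  simp only [Pi.add_apply, Pi.sub_apply, Pi.mul_apply, spectralCoupling,
    spectralCouplingDeriv, weightedCoupling_apply, isomonodromyField,
    sub_add_cancel, add_sub_cancel_right, id, exp_neg, hexp]
  field_simp
  ring

/-- A family `G l` of solutions of the linear systems with spectral parameter `l` along `w`, all
with the same value `C` at the singular point `r = 0`. -/
structure IsSpectralFamily (γ C : Fin 4 → ℝ) (w : ℝ → Fin 4 → ℝ) (G : ℝ → ℝ → Fin 4 → ℝ) :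
    Prop where
  isLinearSolution : ∀ l,
    IsLinearSolution (fun r => spectralCoupling (singularExponent γ) l (expDiff (w r))) (G l)
  tendsto_zero : ∀ l, Tendsto (G l) (𝓝[>] 0) (𝓝 C)

theorem HasFineStructure.tendsto_isomonodromyField (h : HasFineStructure γ L w v)
    (hX : Tendsto X (𝓝[>] 0) (𝓝 C)) :
    Tendsto (fun r => isomonodromyField γ w v l r (X r)) (𝓝[>] 0) (𝓝 0) := by
  obtain ⟨δ, hδ, -, he⟩ := h.exists_isMildlySingular_expDiff
  have hre := tendsto_pi_nhds.1 (he.tendsto_smul hδ)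
  have hX := tendsto_pi_nhds.1 hX
  refine tendsto_pi_nhds.2 fun i => ?_
  have hlim := (((tendsto_pi_nhds.1 h.tendsto_velocity i).const_sub (γ i / 2)).mul (hX i)).add
    ((((hre (i + 1)).const_mul (exp (-(singularExponent γ (i + 1) * l)))).mul (hX (i + 1))).sub
      (((hre i).const_mul (exp (singularExponent γ i * l))).mul (hX (i - 1))))
  convert hlim using 2
  · simp only [isomonodromyField, Pi.smul_apply, smul_eq_mul]
    ring
  · simp only [Pi.smul_apply, Pi.zero_apply, smul_eq_mul]
    ring

theorem HasFineStructure.hasDerivAt_spectralFamily {G : ℝ → ℝ → Fin 4 → ℝ}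
    (h : HasFineStructure γ L w v) (hG : IsSpectralFamily γ C w G) {r : ℝ} (hr : 0 < r) (l : ℝ) :
    HasDerivAt (fun l => G l r) (isomonodromyField γ w v l r (G l r)) l := by
  obtain ⟨δ, hδ, -, he⟩ := h.exists_isMildlySingular_expDiff
  exact hasDerivAt_parameter_of_isLinearSolution hδ he (hasDerivAt_spectralCoupling _ l)
    hG.isLinearSolution hG.tendsto_zero
    (fun s hs => h.hasDerivAt_isomonodromyField (hG.isLinearSolution l) hs)
    (h.tendsto_isomonodromyField (hG.tendsto_zero l)) hr

theorem exists_exp_le_on_Icc (a : Fin 4 → ℝ) (T : ℝ) :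
    ∃ B, 0 ≤ B ∧ ∀ l ∈ Icc 0 T, ∀ i, exp (a i * l) ≤ B ∧ exp (-(a i * l)) ≤ B := by
  have hcont : Continuous fun (l : ℝ) (i : Fin 4) => exp |a i * l| := by fun_prop
  obtain ⟨B, hB⟩ := isCompact_Icc.exists_bound_of_continuousOn (s := Icc 0 T) hcont.continuousOn
  have hle : ∀ l ∈ Icc 0 T, ∀ i, exp |a i * l| ≤ B := fun l hl i => by
    simpa using (norm_le_pi_norm (fun i => exp |a i * l|) i).trans (hB l hl)
  refine ⟨max B 0, le_max_right _ _, fun l hl i => ⟨?_, ?_⟩⟩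
  · exact (exp_le_exp.2 (le_abs_self _)).trans ((hle l hl i).trans (le_max_left _ _))
  · exact (exp_le_exp.2 (neg_le_abs _)).trans ((hle l hl i).trans (le_max_left _ _))

theorem IsTodaSolution.exists_norm_isomonodromyField_le (h : IsTodaSolution w v)
    (γ : Fin 4 → ℝ) (T : ℝ) : ∃ c, 0 < c ∧ ∀ᶠ r in atTop, ∀ l ∈ Icc 0 T, ∀ x,
      ‖isomonodromyField γ w v l r x‖ ≤ c * r * ‖x‖ := by
  obtain ⟨K, hK, hv⟩ := h.isBigO_velocity.exists_nonneg
  obtain ⟨B, hB, hexp⟩ := exists_exp_le_on_Icc (singularExponent γ) T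
  refine ⟨‖γ‖ + K + 4 * B + 1, by positivity, ?_⟩
  have he : ∀ᶠ r in atTop, ‖expDiff (w r)‖ ≤ 2 :=
    h.tendsto_expDiff_atTop.norm.eventually_le_const (by simp)
  filter_upwards [hv.bound, he, eventually_ge_atTop 1] with r hvr her hr l hl x
  have hr0 : 0 ≤ r := zero_le_one.trans hr
  refine (pi_norm_le_iff_of_nonneg (by positivity)).2 fun i => ?_
  have hdiag : |γ i / 2 - v r i| ≤ (‖γ‖ + K) * r := by
    have hγi := norm_le_pi_norm γ i
    have hvi := (norm_le_pi_norm (v r) i).trans hvr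
    rw [id, Real.norm_eq_abs, Real.norm_eq_abs, abs_of_nonneg hr0] at hvi
    rw [Real.norm_eq_abs] at hγi
    have := abs_sub (γ i / 2) (v r i)
    rw [abs_div, abs_two] at this
    nlinarith [norm_nonneg γ]
  have hoff : ∀ j k, ∀ p ∈ Icc 0 B, |p * expDiff (w r) j * x k| ≤ B * 2 * ‖x‖ :=
    fun j k p hp => by
      rw [abs_mul, abs_mul, abs_of_nonneg hp.1]
      gcongr
      exacts [hp.2, (norm_le_pi_norm _ j).trans her, norm_le_pi_norm x k]
  have hx := norm_le_pi_norm x i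
  calc |isomonodromyField γ w v l r x i|
      ≤ |γ i / 2 - v r i| * |x i| + r * (B * 2 * ‖x‖ + B * 2 * ‖x‖) := by
        refine (abs_add_le _ _).trans (add_le_add (abs_mul _ _).le ?_)
        rw [abs_mul, abs_of_nonneg hr0]
        gcongr
        exact (abs_sub _ _).trans (add_le_add
          (hoff _ _ _ ⟨(exp_pos _).le, (hexp l hl _).2⟩)
          (hoff _ _ _ ⟨(exp_pos _).le, (hexp l hl _).1⟩))
    _ ≤ (‖γ‖ + K) * r * ‖x‖ + r * (B * 2 * ‖x‖ + B * 2 * ‖x‖) := by gcongr; exact hx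
    _ ≤ (‖γ‖ + K + 4 * B + 1) * r * ‖x‖ := by nlinarith [mul_nonneg hr0 (norm_nonneg x)]

theorem HasFineStructure.exists_norm_spectralFamily_le {G : ℝ → ℝ → Fin 4 → ℝ}
    (h : HasFineStructure γ L w v) (hG : IsSpectralFamily γ C w G) (T : ℝ) :
    ∃ c, 0 < c ∧ ∀ᶠ r in atTop, ∀ l₀ l, 0 ≤ l₀ → l₀ ≤ l → l ≤ T →
      ‖G l r‖ ≤ ‖G l₀ r‖ * exp (c * r * (l - l₀)) := by
  obtain ⟨c, hc, hfield⟩ := h.exists_norm_isomonodromyField_le γ T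
  refine ⟨c, hc, ?_⟩
  filter_upwards [hfield, eventually_gt_atTop 0] with r hbound hr l₀ l hl₀ hle hl
  have hderiv := h.hasDerivAt_spectralFamily hG hr
  rw [← gronwallBound_ε0]
  exact norm_le_gronwallBound_of_norm_deriv_right_le
    (fun m _ => (hderiv m).continuousAt.continuousWithinAt)
    (fun m _ => (hderiv m).hasDerivWithinAt) le_rfl
    (fun m hm => by simpa using hbound m ⟨hl₀.trans hm.1, hm.2.le.trans hl⟩ (G m r)) l ⟨hle, le_rfl⟩

/-- The diagonal gauge transformation under which `spectralCoupling` becomes `cyclicCoupling`. -/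
noncomputable def gaugeFactor (γ : Fin 4 → ℝ) (l : ℝ) : Fin 4 → ℝ := fun i => exp (-(γ i * l / 2))

theorem gaugeFactor_nonneg (γ : Fin 4 → ℝ) (l : ℝ) : 0 ≤ gaugeFactor γ l := fun _ => (exp_pos _).le

theorem gaugeFactor_neg_mul_cancel (γ x : Fin 4 → ℝ) (l : ℝ) :
    gaugeFactor γ (-l) * (gaugeFactor γ l * x) = x := by
  funext i
  simp only [Pi.mul_apply, gaugeFactor]
  rw [← mul_assoc, ← exp_add]
  ring_nf
  simp

theorem gaugeFactor_mul_spectralCoupling (γ e x : Fin 4 → ℝ) (l : ℝ) :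
    gaugeFactor γ l * spectralCoupling (singularExponent γ) l e x =
      cyclicCoupling (exp l) (exp (-l)) e (gaugeFactor γ l * x) := by
  funext i
  have hprev : exp (-(γ i * l / 2)) * exp (singularExponent γ i * l) =
      exp l * exp (-(γ (i - 1) * l / 2)) := by
    rw [← exp_add, ← exp_add, singularExponent]
    ring_nf
  have hnext : exp (-(γ i * l / 2)) * exp (-(singularExponent γ (i + 1) * l)) =
      exp (-l) * exp (-(γ (i + 1) * l / 2)) := by
    rw [← exp_add, ← exp_add, singularExponent, add_sub_cancel_right]
    ring_nf
  simp only [Pi.mul_apply, spectralCoupling, weightedCoupling_apply, cyclicCoupling_apply,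
    gaugeFactor]
  linear_combination (-(e i * x (i - 1))) * hprev - (e (i + 1) * x (i + 1)) * hnext

theorem IsLinearSolution.gaugeFactor_mul {e : ℝ → Fin 4 → ℝ}
    (hX : IsLinearSolution (fun r => spectralCoupling (singularExponent γ) l (e r)) X) :
    IsLinearSolution (fun r => cyclicCoupling (exp l) (exp (-l)) (e r))
      fun r => gaugeFactor γ l * X r := fun r hr => by
  rw [← gaugeFactor_mul_spectralCoupling]
  exact (hX r hr).const_mul _

theorem isBigO_gaugeFactor_mul {F : Filter ℝ} {g : ℝ → ℝ} (hX : X =O[F] g) (γ : Fin 4 → ℝ) (l : ℝ) :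
    (fun r => gaugeFactor γ l * X r) =O[F] g :=
  ((Asymptotics.isBigO_refl (X : ℝ → Fin 4 → ℝ) F).const_mul_left (gaugeFactor γ l)).trans hX

theorem two_le_exp_add_exp_neg (l : ℝ) : 2 ≤ exp l + exp (-l) := by
  have := one_le_cosh l
  rw [cosh_eq] at this
  linarith

theorem isBigO_exp_of_nonneg_of_spectralCoupling {e : ℝ → Fin 4 → ℝ} {κ : ℝ} (hκ : κ < 2)
    (he : Tendsto e atTop (𝓝 1))
    (hX : IsLinearSolution (fun r => spectralCoupling (singularExponent γ) l (e r)) X)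
    (hX_nonneg : ∀ r, 0 < r → 0 ≤ X r) : X =O[atTop] fun r => exp (-κ * r) := by
  have hdecay := isBigO_exp_of_nonneg_of_cyclicCoupling (hκ.trans_le (two_le_exp_add_exp_neg l)) he
    hX.gaugeFactor_mul fun r hr => mul_nonneg (gaugeFactor_nonneg γ l) (hX_nonneg r hr)
  simpa only [gaugeFactor_neg_mul_cancel] using isBigO_gaugeFactor_mul hdecay γ (-l)

theorem exists_eqOn_smul_of_spectralCoupling {e P : ℝ → Fin 4 → ℝ} {D : Fin 4 → ℝ} {κ : ℝ}
    (hκ : 0 < κ) (hκ' : κ < 2) (he_cont : ContinuousOn e (Ioi 0)) (he : Tendsto e atTop (𝓝 1))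
    (hX : IsLinearSolution (fun r => spectralCoupling (singularExponent γ) l (e r)) X)
    (hP : IsLinearSolution (fun r => spectralCoupling (singularExponent γ) l (e r)) P)
    (hX_decay : X =O[atTop] fun r => exp (-κ * r)) (hP_nonneg : ∀ r, 0 < r → 0 ≤ P r)
    (hX0 : Tendsto X (𝓝[>] 0) (𝓝 C)) (hP0 : Tendsto P (𝓝[>] 0) (𝓝 D)) (hD : D ≠ 0) :
    ∃ t : ℝ, EqOn X (t • P) (Ioi 0) ∧ C = t • D := by
  have hP_ne : ¬ EqOn (fun r => gaugeFactor γ l * P r) 0 (Ioi 0) := fun hzero => by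
    refine hD (tendsto_nhds_unique hP0 (tendsto_const_nhds.congr' ?_))
    filter_upwards [self_mem_nhdsWithin] with r hr
    have hr0 : gaugeFactor γ l * P r = 0 := hzero hr
    rw [← gaugeFactor_neg_mul_cancel γ (P r) l, hr0, mul_zero]
  obtain ⟨t, ht⟩ := exists_eqOn_smul_of_cyclicCoupling hκ
    (hκ'.trans_le (two_le_exp_add_exp_neg l)) he_cont he hX.gaugeFactor_mul hP.gaugeFactor_mul
    (isBigO_gaugeFactor_mul hX_decay γ l)
    (fun r hr => mul_nonneg (gaugeFactor_nonneg γ l) (hP_nonneg r hr)) hP_ne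
  have heq : EqOn X (t • P) (Ioi 0) := fun r hr => by
    have hgauge := congrArg (gaugeFactor γ (-l) * ·) (ht hr)
    simpa only [Pi.smul_apply, mul_smul_comm, gaugeFactor_neg_mul_cancel] using hgauge
  exact ⟨t, heq, tendsto_nhds_unique hX0
    ((hP0.const_smul t).congr' (heq.symm.eventuallyEq_of_mem self_mem_nhdsWithin))⟩

theorem spectralCoupling_nonpos {a e x : Fin 4 → ℝ} {l : ℝ} (he : 0 ≤ e) (hx : 0 ≤ x) :
    spectralCoupling a l e x ≤ 0 := fun i => by
  have hterm : ∀ j k, ∀ t : ℝ, 0 ≤ exp t * e j * x k := fun j k t =>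
    mul_nonneg (mul_nonneg (exp_pos t).le (he j)) (hx k)
  rw [spectralCoupling, weightedCoupling_apply, Pi.zero_apply]
  linarith [hterm i (i - 1) (a i * l), hterm (i + 1) (i + 1) (-(a (i + 1) * l))]

theorem HasFineStructure.exists_nonneg_spectral_isLinearSolution (h : HasFineStructure γ L w v)
    (l : ℝ) : ∃ X C,
      IsLinearSolution (fun r => spectralCoupling (singularExponent γ) l (expDiff (w r))) X ∧
        Tendsto X (𝓝[>] 0) (𝓝 C) ∧ (∀ r, 0 < r → 0 ≤ X r) ∧ C ≠ 0 := by
  obtain ⟨δ, hδ, -, he⟩ := h.exists_isMildlySingular_expDiff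
  exact exists_nonneg_isLinearSolution hδ (he.clm_apply (spectralCoupling _ l))
    fun r _ x hx => spectralCoupling_nonpos (fun i => (expDiff_pos _ i).le) hx

theorem nonneg_of_tendsto_nhdsGT (hX : Tendsto X (𝓝[>] 0) (𝓝 C))
    (hX_nonneg : ∀ r, 0 < r → 0 ≤ X r) : 0 ≤ C :=
  ge_of_tendsto hX (eventually_mem_nhdsWithin.mono hX_nonneg)

theorem HasFineStructure.nonneg_of_isBigO_exp (h : HasFineStructure γ L w v)
    (hX : IsLinearSolution (fun r => spectralCoupling (singularExponent γ) l (expDiff (w r))) X)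
    (hX0 : Tendsto X (𝓝[>] 0) (𝓝 C)) (hC : 0 ≤ C) {κ : ℝ} (hκ : 0 < κ) (hκ' : κ < 2)
    (hX_decay : X =O[atTop] fun r => exp (-κ * r)) : ∀ r, 0 < r → 0 ≤ X r := by
  obtain ⟨P, D, hP, hP0, hP_nonneg, hD⟩ := h.exists_nonneg_spectral_isLinearSolution l
  obtain ⟨t, hXP, rfl⟩ := exists_eqOn_smul_of_spectralCoupling hκ hκ' h.continuousOn_expDiff
    h.tendsto_expDiff_atTop hX hP hX_decay hP_nonneg hX0 hP0 hD
  obtain ⟨i, hi⟩ := Function.ne_iff.1 hD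
  have hDi : 0 < D i := (nonneg_of_tendsto_nhdsGT hP0 hP_nonneg i).lt_of_ne' hi
  have ht : 0 ≤ t := nonneg_of_mul_nonneg_left (hC i) hDi
  intro r hr
  rw [hXP hr]
  exact smul_nonneg ht (hP_nonneg r hr)

theorem forall_of_step {p : ℝ → Prop} {T η : ℝ} (hη : 0 < η) (h0 : p 0)
    (hstep : ∀ l₀ l, 0 ≤ l₀ → l₀ ≤ l → l ≤ T → l - l₀ ≤ η → p l₀ → p l) (hT : 0 ≤ T) : p T := by
  obtain ⟨n, hn⟩ := exists_nat_ge (T / η)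
  have hgrid : ∀ k : ℕ, p (min (k * η) T) := fun k => by
    induction k with
    | zero => simpa [hT] using h0
    | succ k ih =>
      refine hstep _ _ (by positivity) (min_le_min_right _ ?_) (min_le_right _ _) ?_ ih
      · push_cast; linarith
      · push_cast
        rcases min_choice (k * η) T with hmin | hmin
        · rw [hmin]; linarith [min_le_left ((k + 1 : ℝ) * η) T]
        · rw [hmin]; linarith [min_le_right ((k + 1 : ℝ) * η) T]
  simpa [min_eq_right ((div_le_iff₀ hη).1 hn)] using hgrid n

theorem HasFineStructure.nonneg_spectralFamily {G : ℝ → ℝ → Fin 4 → ℝ}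
    (h : HasFineStructure γ L w v) (hG : IsSpectralFamily γ C w G) (hC : 0 ≤ C)
    (hG_nonneg : ∀ r, 0 < r → 0 ≤ G 0 r) {T : ℝ} (hT : 0 ≤ T) : ∀ r, 0 < r → 0 ≤ G T r := by
  obtain ⟨c, hc, hgrowth⟩ := h.exists_norm_spectralFamily_le hG T
  refine forall_of_step (p := fun l => ∀ r, 0 < r → 0 ≤ G l r) (η := 1 / (2 * c)) (by positivity)
    hG_nonneg (fun l₀ l hl₀ hle hl hη ih => ?_) hT
  have hdecay := isBigO_exp_of_nonneg_of_spectralCoupling (κ := 1) one_lt_two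
    h.tendsto_expDiff_atTop (hG.isLinearSolution l₀) ih
  refine h.nonneg_of_isBigO_exp (hG.isLinearSolution l) (hG.tendsto_zero l) hC
    (κ := 1 / 2) (by norm_num) (by norm_num) ?_
  have hle_exp : (G l) =O[atTop] fun r => ‖G l₀ r‖ * exp (1 / 2 * r) := by
    refine .of_bound 1 ?_
    filter_upwards [hgrowth, eventually_ge_atTop 0] with r hgr hr
    rw [one_mul, Real.norm_of_nonneg (by positivity)]
    refine (hgr l₀ l hl₀ hle hl).trans ?_
    rw [le_div_iff₀ (by positivity)] at hη
    refine mul_le_mul_of_nonneg_left (exp_le_exp.2 ?_) (norm_nonneg _)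
    nlinarith [mul_le_mul_of_nonneg_right hη hr]
  refine (hle_exp.trans (hdecay.norm_left.mul (Asymptotics.isBigO_refl _ _))).congr_right
    fun r => ?_
  rw [← exp_add]
  ring_nf

theorem HasFineStructure.exists_spectralFamily (h : HasFineStructure γ L w v) :
    ∃ G C, IsSpectralFamily γ C w G ∧ C ≠ 0 ∧ ∀ l, 0 ≤ l → ∀ r, 0 < r → 0 ≤ G l r := by
  obtain ⟨δ, hδ, -, he⟩ := h.exists_isMildlySingular_expDiff
  obtain ⟨X, C, hX, hX0, hX_nonneg, hC⟩ := h.exists_nonneg_spectral_isLinearSolution 0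
  have hexists : ∀ l, ∃ Y,
      IsLinearSolution (fun r => spectralCoupling (singularExponent γ) l (expDiff (w r))) Y ∧
        Tendsto Y (𝓝[>] 0) (𝓝 C) ∧ (l = 0 → Y = X) := fun l => by
    rcases eq_or_ne l 0 with rfl | hl
    · exact ⟨X, hX, hX0, fun _ => rfl⟩
    · obtain ⟨Y, hY, hY0⟩ := exists_isLinearSolution hδ
        (he.clm_apply (spectralCoupling (singularExponent γ) l)) C
      exact ⟨Y, hY, hY0, fun h0 => absurd h0 hl⟩
  choose G hG hG0 hGX using hexists
  have hfamily : IsSpectralFamily γ C w G := ⟨hG, hG0⟩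
  exact ⟨G, C, hfamily, hC, fun l hl => h.nonneg_spectralFamily hfamily
    (nonneg_of_tendsto_nhdsGT hX0 hX_nonneg) (hGX 0 rfl ▸ hX_nonneg) hl⟩

theorem expDiff_rev_of_skew {x : Fin 4 → ℝ} (hx : ∀ i, x i.rev = -x i) (i : Fin 4) :
    expDiff x i.rev = expDiff x (i + 1) := by
  have hsub : i.rev - 1 = (i + 1).rev := by fin_cases i <;> rfl
  rw [expDiff, expDiff, hsub, hx, hx, add_sub_cancel_right, neg_sub_neg]

theorem spectralCoupling_zero_comp_rev {a e x : Fin 4 → ℝ}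
    (he : ∀ i : Fin 4, e i.rev = e (i + 1)) (i : Fin 4) :
    spectralCoupling a 0 e x i.rev = spectralCoupling a 0 e (fun j => x j.rev) i := by
  simp only [spectralCoupling, weightedCoupling_apply, mul_zero, neg_zero, exp_zero, one_mul]
  have hpred : i.rev - 1 = (i + 1).rev := by fin_cases i <;> rfl
  have hsucc : i.rev + 1 = (i - 1).rev := by fin_cases i <;> rfl
  rw [hpred, hsucc, he, he, sub_add_cancel]
  ring

theorem IsTodaSolution.limit_rev_of_skew (h : IsTodaSolution w v)
    (hw : ∀ r i, w r i.rev = -w r i)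
    (hX : IsLinearSolution (fun r => spectralCoupling (singularExponent γ) 0 (expDiff (w r))) X)
    (hX0 : Tendsto X (𝓝[>] 0) (𝓝 C)) (hX_nonneg : ∀ r, 0 < r → 0 ≤ X r) (hC : C ≠ 0) (i : Fin 4) :
    C i.rev = C i := by
  have hY : IsLinearSolution (fun r => spectralCoupling (singularExponent γ) 0 (expDiff (w r)))
      fun r i => X r i.rev := fun r hr => hasDerivAt_pi.2 fun i =>
    (hasDerivAt_pi.1 (hX r hr) i.rev).congr_deriv
      (spectralCoupling_zero_comp_rev (expDiff_rev_of_skew (hw r)) i)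
  have hY_decay := isBigO_exp_of_nonneg_of_spectralCoupling (κ := 1) one_lt_two
    h.tendsto_expDiff_atTop hY fun r hr i => hX_nonneg r hr i.rev
  obtain ⟨t, -, ht⟩ := exists_eqOn_smul_of_spectralCoupling one_pos one_lt_two
    h.continuousOn_expDiff h.tendsto_expDiff_atTop hY hX hY_decay hX_nonneg
    (tendsto_pi_nhds.2 fun i => tendsto_pi_nhds.1 hX0 i.rev) hX0 hC
  have hsum : ∑ i, C i = t * ∑ i, C i := by
    rw [Finset.mul_sum, ← Equiv.sum_comp Fin.revPerm C]
    exact Finset.sum_congr rfl fun i _ => congrFun ht i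
  have hC_nonneg := nonneg_of_tendsto_nhdsGT hX0 hX_nonneg
  have hsum_ne : ∑ i, C i ≠ 0 := fun hzero =>
    hC ((Fintype.sum_eq_zero_iff_of_nonneg hC_nonneg).1 hzero)
  have ht_one : t = 1 := mul_right_cancel₀ hsum_ne (by rw [one_mul, ← hsum])
  simpa [ht_one] using congrFun ht i

end SpectralFlow

section ScalingLimit

theorem tendsto_norm_comp_mul_add_comp_mul_sub {R F α : Type*} [NormedRing R] [NormedAlgebra ℝ R]
    [NormedAddCommGroup F] [NormedSpace ℝ F] (B B' : R →L[ℝ] F) {l : Filter α} {p q : α → R}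
    {p₀ q₀ : R} (hp : Tendsto p l (𝓝 p₀)) (hq : Tendsto q l (𝓝 q₀)) :
    Tendsto (fun z =>
      ‖B.comp (ContinuousLinearMap.mul ℝ R (p z)) + B'.comp (ContinuousLinearMap.mul ℝ R (q z)) -
        (B.comp (ContinuousLinearMap.mul ℝ R p₀) + B'.comp (ContinuousLinearMap.mul ℝ R q₀))‖)
      l (𝓝 0) :=
  have hcont (B : R →L[ℝ] F) : Continuous fun c => B.comp (ContinuousLinearMap.mul ℝ R c) :=
    ((ContinuousLinearMap.compL ℝ R R F B).comp (ContinuousLinearMap.mul ℝ R)).continuous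
  tendsto_iff_norm_sub_tendsto_zero.1
    ((((hcont B).tendsto p₀).comp hp).add (((hcont B').tendsto q₀).comp hq))

theorem tendsto_norm_weightedCoupling_sub {α : Type*} {l : Filter α} {p q : α → Fin 4 → ℝ}
    {p₀ q₀ : Fin 4 → ℝ} (hp : Tendsto p l (𝓝 p₀)) (hq : Tendsto q l (𝓝 q₀)) :
    Tendsto (fun z => ‖weightedCoupling (p z) (q z) - weightedCoupling p₀ q₀‖) l (𝓝 0) :=
  tendsto_norm_comp_mul_add_comp_mul_sub prevCoupling nextCoupling hp hq

theorem eventually_forall_Ioc_mul_exp_neg {p : ℝ × ℝ → Prop}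
    (hp : ∀ᶠ z in atTop ×ˢ 𝓝[>] 0, p z) (S : ℝ) :
    ∀ᶠ l in atTop, ∀ s ∈ Ioc 0 S, p (l, s * exp (-l)) := by
  obtain ⟨pl, hpl, pr, hpr, hpp⟩ := eventually_prod_iff.1 hp
  obtain ⟨η, hη, hηp⟩ := mem_nhdsGT_iff_exists_Ioo_subset.1 hpr
  have hsmall : Tendsto (fun l => S * exp (-l)) atTop (𝓝 0) := by
    simpa using tendsto_exp_neg_atTop_nhds_zero.const_mul S
  filter_upwards [hpl, hsmall.eventually_lt_const hη] with l hl hSl s hs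
  refine hpp hl (hηp ⟨mul_pos hs.1 (exp_pos _), lt_of_le_of_lt ?_ hSl⟩)
  gcongr
  exact hs.2

theorem isMildlySingular_rpow {ι : Type*} [Fintype ι] {a : ι → ℝ} {δ : ℝ} (hδ : ∀ i, δ < a i) :
    IsMildlySingular δ fun (s : ℝ) i => s ^ (a i - 1) where
  continuousOn := continuousOn_pi.2 fun i => fun s hs =>
    (continuousAt_rpow_const s _ (.inl (ne_of_gt hs))).continuousWithinAt
  exists_norm_le R := by
    refine ⟨∑ i, |R| ^ (a i - δ), fun s hs => ?_⟩
    have hs0 : 0 < s := hs.1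
    have hterm_nonneg : ∀ i, 0 ≤ |R| ^ (a i - δ) := fun i => rpow_nonneg (abs_nonneg R) _
    have hbound_nonneg : 0 ≤ (∑ i, |R| ^ (a i - δ)) * s ^ (δ - 1) :=
      mul_nonneg (Finset.sum_nonneg fun i _ => hterm_nonneg i) (rpow_nonneg hs0.le _)
    refine (pi_norm_le_iff_of_nonneg hbound_nonneg).2 fun i => ?_
    calc ‖s ^ (a i - 1)‖ = s ^ (a i - δ) * s ^ (δ - 1) := by
          rw [Real.norm_of_nonneg (rpow_nonneg hs0.le _), ← rpow_add hs0]
          ring_nf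
      _ ≤ (∑ i, |R| ^ (a i - δ)) * s ^ (δ - 1) := by
          gcongr
          exact (rpow_le_rpow hs0.le (hs.2.trans (le_abs_self R)) (sub_pos.2 (hδ i)).le).trans
            (Finset.single_le_sum (f := fun i => |R| ^ (a i - δ))
              (fun i _ => hterm_nonneg i) (Finset.mem_univ i))

theorem IsLinearSolution.rescale {a : Fin 4 → ℝ} {l : ℝ} {e X : ℝ → Fin 4 → ℝ}
    (hX : IsLinearSolution (fun r => spectralCoupling a l (e r)) X) :
    IsLinearSolution (fun s =>
      weightedCoupling (fun i => (s * exp (-l)) ^ (1 - a i) * e (s * exp (-l)) i)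
        (fun i => exp (-(2 * a i * l)) * ((s * exp (-l)) ^ (1 - a i) * e (s * exp (-l)) i))
        fun i => s ^ (a i - 1)) fun s => X (s * exp (-l)) := fun s hs => by
  have hpow : ∀ i, (s * exp (-l)) ^ (1 - a i) * s ^ (a i - 1) = exp (a i * l) * exp (-l) :=
    fun i => by
      rw [mul_rpow hs.le (exp_pos _).le, mul_right_comm, ← rpow_add hs, ← exp_mul, ← exp_add]
      ring_nf
      simp
  have hexp : ∀ i, exp (-(2 * a i * l)) * exp (a i * l) = exp (-(a i * l)) := fun i => by
    rw [← exp_add]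
    ring_nf
  refine ((hX _ (mul_pos hs (exp_pos _))).scomp s
    ((hasDerivAt_id s).mul_const (exp (-l)))).congr_deriv (funext fun i => ?_)
  simp only [spectralCoupling, Pi.smul_apply, smul_eq_mul, weightedCoupling_apply]
  linear_combination
    (e (s * exp (-l)) i * X (s * exp (-l)) (i - 1)) * hpow i +
    (exp (-(2 * a (i + 1) * l)) * e (s * exp (-l)) (i + 1) * X (s * exp (-l)) (i + 1)) *
      hpow (i + 1) +
    (exp (-l) * e (s * exp (-l)) (i + 1) * X (s * exp (-l)) (i + 1)) * hexp (i + 1)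

variable {w v : ℝ → Fin 4 → ℝ} {γ L C : Fin 4 → ℝ} {G : ℝ → ℝ → Fin 4 → ℝ}

theorem HasFineStructure.tendsto_rescaled_weightedCoupling (h : HasFineStructure γ L w v) :
    Tendsto (fun z : ℝ × ℝ =>
        ‖weightedCoupling (fun i => z.2 ^ (1 - singularExponent γ i) * expDiff (w z.2) i)
          (fun i => exp (-(2 * singularExponent γ i * z.1)) *
            (z.2 ^ (1 - singularExponent γ i) * expDiff (w z.2) i)) -
          weightedCoupling (expDiff ((1 / 2 : ℝ) • L)) 0‖)
      (atTop ×ˢ 𝓝[>] 0) (𝓝 0) := by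
  have hρ : ∀ i, Tendsto
      (fun z : ℝ × ℝ => z.2 ^ (1 - singularExponent γ i) * expDiff (w z.2) i)
      (atTop ×ˢ 𝓝[>] 0) (𝓝 (expDiff ((1 / 2 : ℝ) • L) i)) := fun i =>
    (h.tendsto_rpow_mul_expDiff i).comp tendsto_snd
  have hexp : ∀ i, Tendsto (fun z : ℝ × ℝ => exp (-(2 * singularExponent γ i * z.1)))
      (atTop ×ˢ 𝓝[>] 0) (𝓝 0) := fun i =>
    (tendsto_exp_neg_atTop_nhds_zero.comp (tendsto_id.const_mul_atTop
      (mul_pos two_pos (h.exponent_pos i)))).comp tendsto_fst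
  refine tendsto_norm_weightedCoupling_sub (tendsto_pi_nhds.2 hρ) (tendsto_pi_nhds.2 fun i => ?_)
  simpa using (hexp i).mul (hρ i)

theorem HasFineStructure.exists_tendsto_rescaled (h : HasFineStructure γ L w v)
    (hG : IsSpectralFamily γ C w G) :
    ∃ Φ, IsLinearSolution (fun s => weightedCoupling (expDiff ((1 / 2 : ℝ) • L)) 0
        fun i => s ^ (singularExponent γ i - 1)) Φ ∧ Tendsto Φ (𝓝[>] 0) (𝓝 C) ∧
      ∀ s, 0 < s → Tendsto (fun l => G l (s * exp (-l))) atTop (𝓝 (Φ s)) := by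
  obtain ⟨δ, hδ, hδa, -⟩ := h.exists_isMildlySingular_expDiff
  have hpow := isMildlySingular_rpow hδa
  have hA := hpow.clm_apply (weightedCoupling (expDiff ((1 / 2 : ℝ) • L)) 0)
  obtain ⟨Φ, hΦ, hΦ0⟩ := exists_isLinearSolution hδ hA C
  refine ⟨Φ, hΦ, hΦ0, fun S hS => ?_⟩
  obtain ⟨K, hK⟩ := hpow.exists_norm_le S
  have hto0 : ∀ l, Tendsto (fun s : ℝ => s * exp (-l)) (𝓝[>] 0) (𝓝[>] 0) := fun l =>
    tendsto_nhdsWithin_iff.2 ⟨by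
      simpa using ((continuous_mul_const (exp (-l))).tendsto 0).mono_left nhdsWithin_le_nhds,
      eventually_mem_nhdsWithin.mono fun s hs => mul_pos hs (exp_pos _)⟩
  refine hΦ.tendsto_of_tendsto hδ hS hA (fun l => (hG.isLinearSolution l).rescale) hΦ0
    (fun l => (hG.tendsto_zero l).comp (hto0 l)) fun ε hε => ?_
  have hclose := h.tendsto_rescaled_weightedCoupling.eventually_lt_const
    (show 0 < ε / (|K| + 1) by positivity)
  filter_upwards [eventually_forall_Ioc_mul_exp_neg hclose S] with l hl s hs
  have hs0 : 0 < s := hs.1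
  have hK' : ‖fun i => s ^ (singularExponent γ i - 1)‖ ≤ (|K| + 1) * s ^ (δ - 1) :=
    (hK s hs).trans (by gcongr; linarith [le_abs_self K])
  refine (ContinuousLinearMap.le_opNorm (weightedCoupling _ _ - weightedCoupling _ _) _).trans ?_
  calc _ ≤ ε / (|K| + 1) * ((|K| + 1) * s ^ (δ - 1)) :=
        mul_le_mul (hl s hs).le hK' (norm_nonneg _) (by positivity)
    _ = ε * s ^ (δ - 1) := by field_simp

/-- Nonnegative solutions of the system `Ψ i' = -s ^ (a i - 1) * Ψ (i - 1)` with value `D` at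
`s = 0`. These are the scaling limits of positive spectral families as `l → ∞`. -/
structure IsScalingLimit (a D : Fin 4 → ℝ) (Ψ : ℝ → Fin 4 → ℝ) : Prop where
  exponent_pos : ∀ i, 0 < a i
  hasDerivAt : ∀ s, 0 < s → ∀ i, HasDerivAt (fun s => Ψ s i) (-(s ^ (a i - 1) * Ψ s (i - 1))) s
  tendsto_zero : ∀ i, Tendsto (fun s => Ψ s i) (𝓝[>] 0) (𝓝 (D i))
  nonneg : ∀ s, 0 < s → 0 ≤ Ψ s

theorem IsLinearSolution.isScalingLimit {a : Fin 4 → ℝ} {Φ : ℝ → Fin 4 → ℝ}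
    (ha : ∀ i, 0 < a i) (hΦ : IsLinearSolution
      (fun s => weightedCoupling (expDiff ((1 / 2 : ℝ) • L)) 0 fun i => s ^ (a i - 1)) Φ)
    (hΦ0 : Tendsto Φ (𝓝[>] 0) (𝓝 C)) (hΦ_nonneg : ∀ s, 0 < s → 0 ≤ Φ s) :
    IsScalingLimit a (fun i => exp (-(L i / 2)) * C i) fun s i => exp (-(L i / 2)) * Φ s i where
  exponent_pos := ha
  hasDerivAt s hs i := by
    have hgauge : exp (-(L i / 2)) * expDiff ((1 / 2 : ℝ) • L) i = exp (-(L (i - 1) / 2)) := by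
      rw [expDiff, ← exp_add, Pi.smul_apply, Pi.smul_apply, smul_eq_mul, smul_eq_mul]
      ring_nf
    refine ((hasDerivAt_pi.1 (hΦ s hs) i).const_mul (exp (-(L i / 2)))).congr_deriv ?_
    simp only [weightedCoupling_apply, Pi.zero_apply, ← hgauge]
    ring
  tendsto_zero i := (tendsto_pi_nhds.1 hΦ0 i).const_mul _
  nonneg s hs i := mul_nonneg (exp_pos _).le (hΦ_nonneg s hs i)

theorem HasFineStructure.exists_isScalingLimit (h : HasFineStructure γ L w v)
    (hw : ∀ r i, w r i.rev = -w r i) :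
    ∃ Ψ D, IsScalingLimit (singularExponent γ) D Ψ ∧ D ≠ 0 ∧
      ∀ i : Fin 4, exp (L i.rev / 2) * D i.rev = exp (L i / 2) * D i := by
  obtain ⟨G, C, hG, hC, hG_nonneg⟩ := h.exists_spectralFamily
  obtain ⟨Φ, hΦ, hΦ0, hGΦ⟩ := h.exists_tendsto_rescaled hG
  have hΦ_nonneg : ∀ s, 0 < s → 0 ≤ Φ s := fun s hs => by
    refine ge_of_tendsto (hGΦ s hs) ?_
    filter_upwards [eventually_ge_atTop 0] with l hl
    exact hG_nonneg l hl _ (mul_pos hs (exp_pos _))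
  have hC_rev := h.limit_rev_of_skew hw (hG.isLinearSolution 0) (hG.tendsto_zero 0)
    (hG_nonneg 0 le_rfl) hC
  have hcancel : ∀ i, exp (L i / 2) * (exp (-(L i / 2)) * C i) = C i := fun i => by
    rw [← mul_assoc, ← exp_add, add_neg_cancel, exp_zero, one_mul]
  refine ⟨_, _, hΦ.isScalingLimit h.exponent_pos hΦ0 hΦ_nonneg, ?_, fun i => ?_⟩
  · obtain ⟨i, hi⟩ := Function.ne_iff.1 hC
    exact Function.ne_iff.2 ⟨i, mul_ne_zero (exp_pos _).ne' hi⟩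
  · rw [hcancel, hcancel, hC_rev]

end ScalingLimit

section RealMellin

/-- The Mellin transform of a real function at a real argument. -/
noncomputable def realMellin (f : ℝ → ℝ) (p : ℝ) : ℝ := ∫ s in Ioi 0, s ^ (p - 1) * f s

theorem realMellin_pos {f : ℝ → ℝ} {p : ℝ} (hf : ∀ s, 0 < s → 0 ≤ f s)
    (hf0 : ∀ᶠ s in 𝓝[>] 0, 0 < f s) (hint : IntegrableOn (fun s => s ^ (p - 1) * f s) (Ioi 0)) :
    0 < realMellin f p := by
  obtain ⟨η, hη, hfη⟩ := mem_nhdsGT_iff_exists_Ioo_subset.1 hf0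
  refine (setIntegral_pos_iff_support_of_nonneg_ae (ae_restrict_of_forall_mem measurableSet_Ioi
    fun s hs => mul_nonneg (rpow_nonneg (le_of_lt hs) _) (hf s hs)) hint).2 ?_
  refine (Real.volume_Ioo ▸ ENNReal.ofReal_pos.2 (sub_pos.2 hη)).trans_le
    (measure_mono (s := Ioo 0 η) fun s hs => ⟨?_, hs.1⟩)
  exact (mul_pos (rpow_pos_of_pos hs.1 _) (hfη hs)).ne'

theorem realMellin_convexComb_le {f : ℝ → ℝ} (hf : ∀ s, 0 < s → 0 ≤ f s)
    (hint : ∀ p : ℝ, 0 < p → IntegrableOn (fun s => s ^ (p - 1) * f s) (Ioi 0))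
    (hpos : ∀ p : ℝ, 0 < p → 0 < realMellin f p) {p q a b : ℝ} (hp : 0 < p) (hq : 0 < q)
    (ha : 0 ≤ a) (hb : 0 ≤ b) (hab : a + b = 1) :
    realMellin f (a * p + b * q) ≤ realMellin f p ^ a * realMellin f q ^ b := by
  have hm : 0 < a * p + b * q := convex_Ioi (0 : ℝ) hp hq ha hb hab
  have hA := hpos p hp
  have hB := hpos q hq
  set A := realMellin f p with hA_def
  set B := realMellin f q with hB_def
  have hpointwise : ∀ s ∈ Ioi (0 : ℝ), s ^ (a * p + b * q - 1) * f s ≤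
      A ^ a * B ^ b * (a / A * (s ^ (p - 1) * f s) + b / B * (s ^ (q - 1) * f s)) := by
    intro s hs
    have hs0 : 0 < s := hs
    have hexp : (p - 1) * a + (q - 1) * b = a * p + b * q - 1 := by linear_combination -hab
    have hamgm := geom_mean_le_arith_mean2_weighted ha hb
      (show 0 ≤ s ^ (p - 1) / A by positivity) (show 0 ≤ s ^ (q - 1) / B by positivity) hab
    rw [div_rpow (by positivity) hA.le, div_rpow (by positivity) hB.le, ← rpow_mul hs0.le,
      ← rpow_mul hs0.le, div_mul_div_comm, ← rpow_add hs0, hexp,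
      div_le_iff₀ (by positivity)] at hamgm
    refine (mul_le_mul_of_nonneg_right hamgm (hf s hs)).trans_eq ?_
    ring
  have hintp := (hint p hp).const_mul (a / A)
  have hintq := (hint q hq).const_mul (b / B)
  calc realMellin f (a * p + b * q)
      ≤ ∫ s in Ioi 0, A ^ a * B ^ b *
          (a / A * (s ^ (p - 1) * f s) + b / B * (s ^ (q - 1) * f s)) :=
        setIntegral_mono_on (hint _ hm) ((hintp.add hintq).const_mul _) measurableSet_Ioi hpointwise
    _ = A ^ a * B ^ b * (a / A * A + b / B * B) := by
        rw [integral_const_mul, integral_add hintp hintq, integral_const_mul, integral_const_mul,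
          hA_def, hB_def, realMellin, realMellin]
    _ = A ^ a * B ^ b := by
        rw [div_mul_cancel₀ _ hA.ne', div_mul_cancel₀ _ hB.ne', hab, mul_one]

theorem convexOn_log_realMellin {f : ℝ → ℝ} (hf : ∀ s, 0 < s → 0 ≤ f s)
    (hint : ∀ p : ℝ, 0 < p → IntegrableOn (fun s => s ^ (p - 1) * f s) (Ioi 0))
    (hpos : ∀ p : ℝ, 0 < p → 0 < realMellin f p) :
    ConvexOn ℝ (Ioi 0) fun p => log (realMellin f p) := by
  refine ⟨convex_Ioi 0, fun p hp q hq a b ha hb hab => ?_⟩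
  have hA := hpos p hp
  have hB := hpos q hq
  calc log (realMellin f (a * p + b * q))
      ≤ log (realMellin f p ^ a * realMellin f q ^ b) :=
        log_le_log (hpos _ (convex_Ioi (0 : ℝ) hp hq ha hb hab))
          (realMellin_convexComb_le hf hint hpos hp hq ha hb hab)
    _ = a * log (realMellin f p) + b * log (realMellin f q) := by
        rw [log_mul (by positivity) (by positivity), log_rpow hA, log_rpow hB]

end RealMellin

section BohrMollerup

theorem mul_le_sub_le_of_convexOn_of_add_eq {u ℓ : ℝ → ℝ} {h x t : ℝ} (hu : ConvexOn ℝ (Ioi 0) u)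
    (hstep : ∀ x, 0 < x → u (x + h) = u x + ℓ x) (hh : 0 < h) (hx : 0 < x) (ht : 0 < t) :
    t / h * ℓ x ≤ u (x + h + t) - u (x + h) ∧
      u (x + h + t) - u (x + h) ≤ t / h * ℓ (x + h + t) := by
  have hleft := hu.slope_mono_adjacent (x := x) (y := x + h) (z := x + h + t) hx
    (show 0 < x + h + t by positivity) (by linarith) (by linarith)
  have hright := hu.slope_mono_adjacent (x := x + h) (y := x + h + t) (z := x + h + t + h)
    (show 0 < x + h by positivity) (show 0 < x + h + t + h by positivity) (by linarith)
    (by linarith)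
  rw [hstep x hx, add_sub_cancel_left, add_sub_cancel_left, add_sub_cancel_left, ← hstep x hx,
    le_div_iff₀ ht] at hleft
  rw [hstep (x + h + t) (by positivity), add_sub_cancel_left, add_sub_cancel_left,
    add_sub_cancel_left, div_le_iff₀ ht] at hright
  exact ⟨by linarith [hleft, div_mul_comm t h (ℓ x)],
    by linarith [hright, div_mul_comm t h (ℓ (x + h + t))]⟩

theorem add_nat_mul_sub_eq_sub {u v ℓ : ℝ → ℝ} {h x : ℝ}
    (hu : ∀ x, 0 < x → u (x + h) = u x + ℓ x) (hv : ∀ x, 0 < x → v (x + h) = v x + ℓ x)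
    (hh : 0 < h) (hx : 0 < x) (n : ℕ) : u (x + n * h) - v (x + n * h) = u x - v x := by
  induction n with
  | zero => simp
  | succ n ih =>
    have hxn : 0 < x + n * h := by positivity
    rw [← ih, Nat.cast_succ, add_one_mul, ← add_assoc, hu _ hxn, hv _ hxn, add_sub_add_right_eq_sub]

theorem sub_eq_sub_of_convexOn_of_add_eq {u v ℓ : ℝ → ℝ} {h p t : ℝ}
    (hu : ConvexOn ℝ (Ioi 0) u) (hv : ConvexOn ℝ (Ioi 0) v)
    (hu_step : ∀ x, 0 < x → u (x + h) = u x + ℓ x) (hv_step : ∀ x, 0 < x → v (x + h) = v x + ℓ x)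
    (hℓ : ∀ y, Tendsto (fun x => ℓ (x + y) - ℓ x) atTop (𝓝 0)) (hh : 0 < h) (hp : 0 < p)
    (ht : 0 < t) : u (p + t) - u p = v (p + t) - v p := by
  have hbound : ∀ n : ℕ, |(u (p + t) - u p) - (v (p + t) - v p)| ≤
      t / h * (ℓ (p + n * h + (h + t)) - ℓ (p + n * h)) := fun n => by
    have hpn : 0 < p + n * h := by positivity
    obtain ⟨hu_ge, hu_le⟩ := mul_le_sub_le_of_convexOn_of_add_eq hu hu_step hh hpn ht
    obtain ⟨hv_ge, hv_le⟩ := mul_le_sub_le_of_convexOn_of_add_eq hv hv_step hh hpn ht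
    have hper := add_nat_mul_sub_eq_sub hu_step hv_step hh hp (n + 1)
    have hper_t := add_nat_mul_sub_eq_sub hu_step hv_step hh (add_pos hp ht) (n + 1)
    rw [Nat.cast_succ, show p + (n + 1) * h = p + n * h + h by ring] at hper
    rw [Nat.cast_succ, show p + t + (n + 1) * h = p + n * h + h + t by ring] at hper_t
    rw [mul_sub, ← add_assoc, abs_le]
    constructor <;> linarith
  have hn : Tendsto (fun n : ℕ => p + n * h) atTop atTop :=
    tendsto_atTop_add_const_left _ _ (tendsto_natCast_atTop_atTop.atTop_mul_const hh)
  have hlim : Tendsto (fun n : ℕ => t / h * (ℓ (p + n * h + (h + t)) - ℓ (p + n * h))) atTop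
      (𝓝 0) := by
    simpa using ((hℓ (h + t)).comp hn).const_mul (t / h)
  exact sub_eq_zero.1 (abs_nonpos_iff.1 (ge_of_tendsto' hlim hbound))

/-- The logarithm of the convex solution `x ↦ h ^ (x / h) * Γ (x / h)` of `F (x + h) = x * F x`. -/
noncomputable def stepLogGamma (h x : ℝ) : ℝ := x / h * log h + log (Gamma (x / h))

variable {h : ℝ}

theorem stepLogGamma_add_step (hh : 0 < h) {x : ℝ} (hx : 0 < x) :
    stepLogGamma h (x + h) = stepLogGamma h x + log x := by
  rw [stepLogGamma, stepLogGamma, add_div, div_self hh.ne', Gamma_add_one (by positivity),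
    log_mul (by positivity) (Gamma_pos_of_pos (by positivity)).ne', log_div hx.ne' hh.ne']
  ring

theorem convexOn_stepLogGamma (hh : 0 < h) : ConvexOn ℝ (Ioi 0) (stepLogGamma h) := by
  refine ⟨convex_Ioi 0, fun p hp q hq a b ha hb hab => ?_⟩
  have hconv := convexOn_log_Gamma.2 (show p / h ∈ Ioi 0 from div_pos hp hh)
    (show q / h ∈ Ioi 0 from div_pos hq hh) ha hb hab
  simp only [smul_eq_mul, Function.comp_apply, stepLogGamma] at hconv ⊢
  rw [show (a * p + b * q) / h = a * (p / h) + b * (q / h) by ring]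
  linarith

theorem convexOn_sum_stepLogGamma {ι : Type*} [Fintype ι] (hh : 0 < h) {c : ι → ℝ}
    (hc : ∀ j, 0 ≤ c j) : ConvexOn ℝ (Ioi 0) fun p => ∑ j, stepLogGamma h (p + c j) := by
  refine ⟨convex_Ioi 0, fun p hp q hq a b ha hb hab => ?_⟩
  simp only [smul_eq_mul, Finset.mul_sum, ← Finset.sum_add_distrib]
  refine Finset.sum_le_sum fun j _ => ?_
  have hconv := (convexOn_stepLogGamma hh).2 (show p + c j ∈ Ioi 0 from add_pos_of_pos_of_nonneg hp
    (hc j)) (show q + c j ∈ Ioi 0 from add_pos_of_pos_of_nonneg hq (hc j)) ha hb hab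
  rwa [smul_eq_mul, smul_eq_mul, smul_eq_mul, smul_eq_mul,
    show a * (p + c j) + b * (q + c j) = a * p + b * q + c j by linear_combination c j * hab]
    at hconv

theorem sub_eq_sum_stepLogGamma_sub {ι : Type*} [Fintype ι] {u : ℝ → ℝ} {c : ι → ℝ} {p t : ℝ}
    (hh : 0 < h) (hc : ∀ j, 0 ≤ c j) (hu : ConvexOn ℝ (Ioi 0) u)
    (hu_step : ∀ x, 0 < x → u (x + h) = u x + ∑ j, log (x + c j)) (hp : 0 < p) (ht : 0 < t) :
    u (p + t) - u p = ∑ j, (stepLogGamma h (p + t + c j) - stepLogGamma h (p + c j)) := by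
  rw [Finset.sum_sub_distrib]
  refine sub_eq_sub_of_convexOn_of_add_eq (v := fun p => ∑ j, stepLogGamma h (p + c j)) hu
    (convexOn_sum_stepLogGamma hh hc) hu_step (fun x hx => ?_) (fun y => ?_) hh hp ht
  · rw [← Finset.sum_add_distrib]
    refine Finset.sum_congr rfl fun j _ => ?_
    rw [add_right_comm, stepLogGamma_add_step hh (add_pos_of_pos_of_nonneg hx (hc j))]
  · simp only [← Finset.sum_sub_distrib, add_right_comm _ y]
    simpa using tendsto_finsetSum Finset.univ fun j _ => (tendsto_log_comp_add_sub_log y).comp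
      (tendsto_atTop_add_const_right atTop (c j) tendsto_id)

end BohrMollerup

theorem sum_eq_add_prev (a : Fin 4 → ℝ) (i : Fin 4) :
    ∑ j, a j = a i + a (i - 1) + a (i - 2) + a (i - 3) := by
  rw [Fin.sum_univ_four]
  fin_cases i <;> simp only [Fin.zero_eta, Fin.mk_one, Fin.reduceFinMk, Fin.reduceSub] <;> ring

/-- The logarithm of the product of Gamma values to which the `i`-th limit of a scaling limit with
exponents `a` is proportional. -/
noncomputable def logGammaProduct (a : Fin 4 → ℝ) (i : Fin 4) : ℝ :=
  stepLogGamma (∑ j, a j) (a i) + stepLogGamma (∑ j, a j) (a i + a (i - 1)) +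
    stepLogGamma (∑ j, a j) (a i + a (i - 1) + a (i - 2))

namespace IsScalingLimit

variable {a D : Fin 4 → ℝ} {Ψ : ℝ → Fin 4 → ℝ}

theorem antitoneOn (h : IsScalingLimit a D Ψ) (i : Fin 4) :
    AntitoneOn (fun s => Ψ s i) (Ioi 0) := by
  refine antitoneOn_of_hasDerivWithinAt_nonpos (convex_Ioi 0)
    (fun s hs => (h.hasDerivAt s hs i).continuousAt.continuousWithinAt)
    (f' := fun s => -(s ^ (a i - 1) * Ψ s (i - 1))) (fun s hs => ?_) fun s hs => ?_ <;>
    rw [interior_Ioi] at hs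
  · exact (h.hasDerivAt s hs i).hasDerivWithinAt
  · exact neg_nonpos.2 (mul_nonneg (rpow_nonneg (le_of_lt hs) _) (h.nonneg s hs (i - 1)))

theorem apply_le (h : IsScalingLimit a D Ψ) (i : Fin 4) {s : ℝ} (hs : 0 < s) : Ψ s i ≤ D i := by
  refine ge_of_tendsto (h.tendsto_zero i) ?_
  filter_upwards [Ioc_mem_nhdsGT hs] with t ht
  exact h.antitoneOn i ht.1 hs ht.2

theorem rpow_mul_apply_two_mul_le (h : IsScalingLimit a D Ψ) (i : Fin 4) {s : ℝ} (hs : 0 < s) :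
    s ^ a i * Ψ (2 * s) (i - 1) ≤ 2 * Ψ s i := by
  have h2s : s < 2 * s := by linarith
  obtain ⟨ξ, ⟨hsξ, hξ2s⟩, hξ⟩ := exists_hasDerivAt_eq_slope (fun s => Ψ s i) _ h2s
    (fun t ht => (h.hasDerivAt t (hs.trans_le ht.1) i).continuousAt.continuousWithinAt)
    fun t ht => h.hasDerivAt t (hs.trans ht.1) i
  have hξ0 : 0 < ξ := hs.trans hsξ
  have hpow : s ^ a i / (2 * s) ≤ ξ ^ (a i - 1) := by
    rw [rpow_sub_one hξ0.ne']
    exact div_le_div₀ (by positivity) (rpow_le_rpow hs.le hsξ.le (h.exponent_pos i).le) hξ0 hξ2s.le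
  rw [two_mul s, add_sub_cancel_right, ← two_mul, eq_div_iff hs.ne'] at hξ
  calc s ^ a i * Ψ (2 * s) (i - 1)
      = 2 * (s ^ a i / (2 * s) * Ψ (2 * s) (i - 1) * s) := by field_simp
    _ ≤ 2 * (ξ ^ (a i - 1) * Ψ ξ (i - 1) * s) := by
        gcongr
        · exact h.nonneg _ (by positivity) _
        · exact h.antitoneOn (i - 1) hξ0 (show 0 < 2 * s by positivity) hξ2s.le
    _ ≤ 2 * Ψ s i := by
        have hΨ2s : 0 ≤ Ψ (2 * s) i := h.nonneg (2 * s) (by positivity) i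
        linarith

theorem isBigO_rpow_neg_prev (h : IsScalingLimit a D Ψ) {i : Fin 4} {p : ℝ}
    (hp : (fun s => Ψ s i) =O[atTop] fun s : ℝ => s ^ (-p)) :
    (fun s => Ψ s (i - 1)) =O[atTop] fun s : ℝ => s ^ (-(p + a i)) := by
  have hhalf : Tendsto (fun s : ℝ => s / 2) atTop atTop :=
    tendsto_id.atTop_div_const two_pos
  have hle : (fun s => Ψ s (i - 1)) =O[atTop] fun s => (s / 2) ^ (-a i) * Ψ (s / 2) i := by
    refine Asymptotics.IsBigO.of_bound 2 ?_
    filter_upwards [eventually_gt_atTop 0] with s hs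
    have hs2 : 0 < s / 2 := half_pos hs
    have hbound := h.rpow_mul_apply_two_mul_le i hs2
    rw [mul_div_cancel₀ s two_ne_zero, ← le_div_iff₀' (by positivity)] at hbound
    rw [norm_of_nonneg (h.nonneg s hs _), norm_of_nonneg
      (mul_nonneg (rpow_nonneg hs2.le _) (h.nonneg _ hs2 _)), rpow_neg hs2.le]
    exact hbound.trans_eq (by ring)
  refine (hle.trans (((Asymptotics.isBigO_refl (fun s : ℝ => s ^ (-a i)) atTop).mul hp).comp_tendsto
    hhalf)).trans ?_
  refine Asymptotics.IsBigO.of_bound ((2⁻¹ : ℝ) ^ (-(p + a i))) ?_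
  filter_upwards [eventually_gt_atTop 0] with s hs
  simp only [Function.comp_apply]
  rw [← rpow_add (half_pos hs), ← neg_add_rev, norm_of_nonneg (by positivity),
    norm_of_nonneg (by positivity), div_eq_mul_inv, mul_comm s, mul_rpow (by positivity) hs.le]

theorem isBigO_rpow_neg (h : IsScalingLimit a D Ψ) (i : Fin 4) (p : ℝ) :
    (fun s => Ψ s i) =O[atTop] fun s : ℝ => s ^ (-p) := by
  obtain ⟨δ, hδ, hδa⟩ := Pi.exists_forall_pos_add_lt (x := 0) (y := a) h.exponent_pos
  have hstep : ∀ n : ℕ, ∀ i, (fun s => Ψ s i) =O[atTop] fun s : ℝ => s ^ (-(n * δ)) := fun n => by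
    induction n with
    | zero =>
      refine fun i => Asymptotics.IsBigO.of_bound (D i) ?_
      filter_upwards [eventually_gt_atTop 0] with s hs
      simpa [norm_of_nonneg (h.nonneg s hs i)] using h.apply_le i hs
    | succ n ih =>
      refine fun i => (add_sub_cancel_right i 1 ▸ h.isBigO_rpow_neg_prev (ih (i + 1))).trans ?_
      refine Asymptotics.IsBigO.of_bound' ?_
      filter_upwards [eventually_ge_atTop 1] with s hs
      rw [norm_of_nonneg (by positivity), norm_of_nonneg (by positivity)]
      refine rpow_le_rpow_of_exponent_le hs (neg_le_neg ?_)
      have := hδa (i + 1)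
      push_cast
      simp only [Pi.zero_apply, zero_add] at this
      linarith
  obtain ⟨n, hn⟩ := exists_nat_ge (p / δ)
  refine (hstep n i).trans (Asymptotics.IsBigO.of_bound' ?_)
  filter_upwards [eventually_ge_atTop 1] with s hs
  rw [norm_of_nonneg (by positivity), norm_of_nonneg (by positivity)]
  exact rpow_le_rpow_of_exponent_le hs (neg_le_neg ((div_le_iff₀ hδ).1 hn))

theorem tendsto_rpow_mul_atTop (h : IsScalingLimit a D Ψ) (i : Fin 4) (p : ℝ) :
    Tendsto (fun s => s ^ p * Ψ s i) atTop (𝓝 0) := by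
  refine (((Asymptotics.isBigO_refl (fun s : ℝ => s ^ p) atTop).mul
    (h.isBigO_rpow_neg i (p + 1))).trans_tendsto ?_)
  refine (tendsto_rpow_neg_atTop one_pos).congr' ?_
  filter_upwards [eventually_gt_atTop 0] with s hs
  rw [← rpow_add hs]
  ring_nf

theorem integrableOn_rpow_mul (h : IsScalingLimit a D Ψ) (i : Fin 4) {p : ℝ} (hp : 0 < p) :
    IntegrableOn (fun s => s ^ (p - 1) * Ψ s i) (Ioi 0) := by
  refine mellin_convergent_of_isBigO_scalar (a := p + 1) (b := 0) (ContinuousOn.locallyIntegrableOn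
    (fun s hs => (h.hasDerivAt s hs i).continuousAt.continuousWithinAt) measurableSet_Ioi)
    (h.isBigO_rpow_neg i _) (lt_add_one p) ?_ hp
  simpa using (h.tendsto_zero i).isBigO_one ℝ

theorem eq_realMellin (h : IsScalingLimit a D Ψ) (i : Fin 4) :
    D i = realMellin (fun s => Ψ s (i - 1)) (a i) := by
  have hparts := integral_Ioi_mul_deriv_eq_deriv_mul (a := 0) (a' := D i) (b' := 0)
    (u := fun _ => 1) (u' := fun _ => 0) (v := fun s => Ψ s i)
    (fun s _ => hasDerivAt_const s 1) (fun s hs => h.hasDerivAt s hs i)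
    (by simpa [Pi.mul_def] using (h.integrableOn_rpow_mul (i - 1) (h.exponent_pos i)).neg)
    (by simp [Pi.mul_def]) (by simpa [Pi.mul_def] using h.tendsto_zero i)
    (by simpa [Pi.mul_def] using h.tendsto_rpow_mul_atTop i 0)
  simp only [one_mul, zero_mul, integral_neg, integral_zero, sub_zero, zero_sub, neg_inj] at hparts
  exact hparts.symm

theorem mul_realMellin (h : IsScalingLimit a D Ψ) (i : Fin 4) {p : ℝ} (hp : 0 < p) :
    p * realMellin (fun s => Ψ s i) p = realMellin (fun s => Ψ s (i - 1)) (p + a i) := by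
  have hshift : ∀ s ∈ Ioi (0 : ℝ), s ^ p * -(s ^ (a i - 1) * Ψ s (i - 1)) =
      -(s ^ (p + a i - 1) * Ψ s (i - 1)) := fun s hs => by
    rw [mul_neg, ← mul_assoc, ← rpow_add hs, add_sub_assoc]
  have hparts := integral_Ioi_mul_deriv_eq_deriv_mul (a := 0) (a' := 0) (b' := 0)
    (u := fun s => s ^ p) (u' := fun s => p * s ^ (p - 1)) (v := fun s => Ψ s i)
    (fun s hs => hasDerivAt_rpow_const (.inl (ne_of_gt hs))) (fun s hs => h.hasDerivAt s hs i)
    ((h.integrableOn_rpow_mul (i - 1) (add_pos hp (h.exponent_pos i))).neg.congr_fun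
      (fun s hs => (hshift s hs).symm) measurableSet_Ioi)
    (by simpa only [IntegrableOn, Pi.mul_def, mul_assoc] using
      (h.integrableOn_rpow_mul i hp).const_mul p)
    (by simpa [Pi.mul_def] using ((tendsto_rpow_nhdsGT_zero hp).mono_right
      nhdsWithin_le_nhds).mul (h.tendsto_zero i))
    (h.tendsto_rpow_mul_atTop i p)
  rw [setIntegral_congr_fun measurableSet_Ioi hshift, integral_neg, sub_self, zero_sub,
    neg_inj] at hparts
  simp only [mul_assoc, integral_const_mul] at hparts
  exact hparts.symm

theorem nonneg_limit (h : IsScalingLimit a D Ψ) (i : Fin 4) : 0 ≤ D i :=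
  (h.nonneg 1 one_pos i).trans (h.apply_le i one_pos)

theorem limit_prev_pos (h : IsScalingLimit a D Ψ) {i : Fin 4} (hi : 0 < D i) : 0 < D (i - 1) := by
  refine (h.nonneg_limit (i - 1)).lt_of_ne fun hzero => hi.ne' ?_
  rw [h.eq_realMellin i, realMellin]
  refine setIntegral_eq_zero_of_forall_eq_zero fun s hs => ?_
  rw [le_antisymm ((h.apply_le (i - 1) hs).trans_eq hzero.symm) (h.nonneg s hs _), mul_zero]

theorem limit_pos (h : IsScalingLimit a D Ψ) (hD : D ≠ 0) (i : Fin 4) : 0 < D i := by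
  obtain ⟨j, hj⟩ := Function.ne_iff.1 hD
  have hj0 : 0 < D j := (h.nonneg_limit j).lt_of_ne' hj
  have hcycle : ∀ i j : Fin 4, i = j ∨ i = j - 1 ∨ i = j - 1 - 1 ∨ i = j - 1 - 1 - 1 := by decide
  have hj1 := h.limit_prev_pos hj0
  have hj2 := h.limit_prev_pos hj1
  rcases hcycle i j with rfl | rfl | rfl | rfl
  exacts [hj0, hj1, hj2, h.limit_prev_pos hj2]

theorem realMellin_pos (h : IsScalingLimit a D Ψ) (hD : D ≠ 0) (i : Fin 4) {p : ℝ} (hp : 0 < p) :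
    0 < realMellin (fun s => Ψ s i) p :=
  _root_.realMellin_pos (fun s hs => h.nonneg s hs i)
    ((h.tendsto_zero i).eventually_const_lt (h.limit_pos hD i)) (h.integrableOn_rpow_mul i hp)

theorem convexOn_log_realMellin (h : IsScalingLimit a D Ψ) (hD : D ≠ 0) (i : Fin 4) :
    ConvexOn ℝ (Ioi 0) fun p => log (realMellin (fun s => Ψ s i) p) :=
  _root_.convexOn_log_realMellin (fun s hs => h.nonneg s hs i)
    (fun _ => h.integrableOn_rpow_mul i) fun _ => h.realMellin_pos hD i

theorem log_realMellin_prev (h : IsScalingLimit a D Ψ) (hD : D ≠ 0) (i : Fin 4) {p : ℝ}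
    (hp : 0 < p) : log (realMellin (fun s => Ψ s (i - 1)) (p + a i)) =
      log p + log (realMellin (fun s => Ψ s i) p) := by
  rw [← h.mul_realMellin i hp, log_mul hp.ne' (h.realMellin_pos hD i hp).ne']

theorem log_realMellin_step (h : IsScalingLimit a D Ψ) (hD : D ≠ 0) (i : Fin 4) {p : ℝ}
    (hp : 0 < p) : log (realMellin (fun s => Ψ s i) (p + ∑ j, a j)) =
      log (realMellin (fun s => Ψ s i) p) +
        ∑ j, log (p + ![0, a i, a i + a (i - 1), a i + a (i - 1) + a (i - 2)] j) := by
  have hi := h.exponent_pos i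
  have hi1 := h.exponent_pos (i - 1)
  have hi2 := h.exponent_pos (i - 2)
  have hstep0 := h.log_realMellin_prev hD i hp
  have hstep1 := h.log_realMellin_prev hD (i - 1) (add_pos hp hi)
  have hstep2 := h.log_realMellin_prev hD (i - 2) (add_pos (add_pos hp hi) hi1)
  have hstep3 := h.log_realMellin_prev hD (i - 3) (add_pos (add_pos (add_pos hp hi) hi1) hi2)
  simp only [sub_sub, Fin.reduceAdd, sub_zero] at hstep1 hstep2 hstep3
  simp only [sum_eq_add_prev a i, Fin.sum_univ_four, ← add_assoc, hstep3, hstep2, hstep1, hstep0,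
    Matrix.cons_val, add_zero]
  ring

theorem log_limit_sub_prev (h : IsScalingLimit a D Ψ) (hD : D ≠ 0) (i : Fin 4) :
    log (D i) - log (D (i - 1)) = logGammaProduct a i - logGammaProduct a (i - 1) := by
  have hpos := h.exponent_pos
  have hperiod : 0 < ∑ j, a j := Finset.sum_pos (fun j _ => hpos j) Finset.univ_nonempty
  have hsum := sum_eq_add_prev a i
  set S := ∑ j, a j
  have hnonneg : ∀ j, 0 ≤ ![0, a (i - 2), a (i - 2) + a (i - 2 - 1),
      a (i - 2) + a (i - 2 - 1) + a (i - 2 - 2)] j := by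
    have hi2 := hpos (i - 2)
    have hi3 := hpos (i - 2 - 1)
    have hi4 := hpos (i - 2 - 2)
    intro j
    fin_cases j <;> dsimp <;> positivity
  have hshift := stepLogGamma_add_step hperiod (hpos i)
  have hprev := h.log_realMellin_prev hD (i - 1) (hpos i)
  have hincr := sub_eq_sum_stepLogGamma_sub hperiod hnonneg (h.convexOn_log_realMellin hD (i - 2))
    (fun p hp => h.log_realMellin_step hD (i - 2) hp) (hpos (i - 1)) (hpos i)
  simp only [sub_sub, Fin.reduceAdd, sub_zero, Fin.sum_univ_four, Matrix.cons_val, add_zero]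
    at hprev hincr
  rw [add_comm (a (i - 1)) (a i), show a i + a (i - 1) + (a (i - 2) + a (i - 3)) = S by linarith,
    show a (i - 1) + (a (i - 2) + a (i - 3) + a i) = S by linarith,
    show a i + a (i - 1) + (a (i - 2) + a (i - 3) + a i) = a i + S by linarith, ← add_assoc]
    at hincr
  rw [h.eq_realMellin i, h.eq_realMellin (i - 1)]
  simp only [logGammaProduct, sub_sub, Fin.reduceAdd]
  linarith

theorem log_limit_sub (h : IsScalingLimit a D Ψ) (hD : D ≠ 0) (i j : Fin 4) :
    log (D i) - log (D j) = logGammaProduct a i - logGammaProduct a j := by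
  have hcycle : ∀ i j : Fin 4, i = j ∨ i = j - 1 ∨ i = j - 1 - 1 ∨ i = j - 1 - 1 - 1 := by decide
  have h1 := h.log_limit_sub_prev hD j
  have h2 := h.log_limit_sub_prev hD (j - 1)
  have h3 := h.log_limit_sub_prev hD (j - 1 - 1)
  rcases hcycle i j with rfl | rfl | rfl | rfl <;> linarith

end IsScalingLimit

section ConnectionConstants

variable {w v : ℝ → Fin 4 → ℝ} {γ L : Fin 4 → ℝ}

theorem HasFineStructure.limit_rev (h : HasFineStructure γ L w v)
    (hw : ∀ r i, w r i.rev = -w r i) (hγ : ∀ i : Fin 4, γ i.rev = -γ i) (i : Fin 4) :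
    L i.rev = -L i := by
  refine tendsto_nhds_unique (h.tendsto_sub_log i.rev) ((h.tendsto_sub_log i).neg.congr fun r => ?_)
  rw [hw, hγ]
  ring

theorem HasFineStructure.eq_logGammaProduct_sub (h : HasFineStructure γ L w v)
    (hw : ∀ r i, w r i.rev = -w r i) (hγ : ∀ i : Fin 4, γ i.rev = -γ i) (i : Fin 4) :
    L i = logGammaProduct (singularExponent γ) i.rev - logGammaProduct (singularExponent γ) i := by
  obtain ⟨Ψ, D, hΨ, hD, hrev⟩ := h.exists_isScalingLimit hw
  have hlog := congrArg log (hrev i)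
  rw [log_mul (exp_pos _).ne' (hΨ.limit_pos hD _).ne', log_mul (exp_pos _).ne'
    (hΨ.limit_pos hD _).ne', log_exp, log_exp, h.limit_rev hw hγ] at hlog
  linarith [hΨ.log_limit_sub hD i.rev i]

theorem log_two_rpow_mul_Gamma_div_Gamma {ι : Type*} [Fintype ι] {x y : ι → ℝ} {t : ℝ}
    (hx : ∀ j, 0 < x j) (hy : ∀ j, 0 < y j) (ht : ∑ j, x j - ∑ j, y j = 4 * t) :
    log (2 ^ (2 * t) * (∏ j, Gamma (x j / 4)) / ∏ j, Gamma (y j / 4)) =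
      ∑ j, stepLogGamma 4 (x j) - ∑ j, stepLogGamma 4 (y j) := by
  have hΓx : ∀ j, 0 < Gamma (x j / 4) := fun j => Gamma_pos_of_pos (div_pos (hx j) four_pos)
  have hΓy : ∀ j, 0 < Gamma (y j / 4) := fun j => Gamma_pos_of_pos (div_pos (hy j) four_pos)
  have hx0 := Finset.prod_pos fun j (_ : j ∈ Finset.univ) => hΓx j
  have hy0 := Finset.prod_pos fun j (_ : j ∈ Finset.univ) => hΓy j
  have hlog4 : log 4 = 2 * log 2 := by
    rw [show (4 : ℝ) = 2 ^ 2 by norm_num, log_pow, Nat.cast_ofNat]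
  rw [log_div (by positivity) hy0.ne', log_mul (by positivity) hx0.ne', log_rpow two_pos,
    log_prod fun j _ => (hΓx j).ne', log_prod fun j _ => (hΓy j).ne']
  simp only [stepLogGamma, Finset.sum_add_distrib, ← Finset.sum_mul, ← Finset.sum_div, hlog4]
  linear_combination (-(log 2) / 2) * ht

theorem singularExponent_skewPalindrome (γ0 γ1 : ℝ) :
    singularExponent (skewPalindrome γ0 γ1) =
      ![1 + γ0, 1 + (γ1 - γ0) / 2, 1 - γ1, 1 + (γ1 - γ0) / 2] := by
  funext i
  fin_cases i <;> simp [singularExponent, skewPalindrome] <;> ring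

theorem logGammaProduct_skewPalindrome (γ0 γ1 : ℝ) :
    logGammaProduct (singularExponent (skewPalindrome γ0 γ1)) =
      fun i => ∑ j, stepLogGamma 4 (![
        ![1 + γ0, 2 + (γ0 + γ1) / 2, 3 + (γ0 - γ1) / 2],
        ![1 + (γ1 - γ0) / 2, 2 + (γ0 + γ1) / 2, 3 + γ1],
        ![1 - γ1, 2 - (γ0 + γ1) / 2, 3 + (γ0 - γ1) / 2],
        ![1 + (γ1 - γ0) / 2, 2 - (γ0 + γ1) / 2, 3 - γ0]] i j : ℝ) := by
  have hsum : ∑ j, singularExponent (skewPalindrome γ0 γ1) j = 4 := by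
    simp only [singularExponent_skewPalindrome, Fin.sum_univ_four, Matrix.cons_val]
    ring
  funext i
  rw [logGammaProduct, hsum, singularExponent_skewPalindrome, Fin.sum_univ_three]
  fin_cases i <;> simp <;> ring_nf

section SkewPalindrome

variable {γ0 γ1 : ℝ}

theorem singularExponent_skewPalindrome_pos (hγ0 : -1 < γ0) (hγ1 : γ1 < 1) (hγ : γ1 > γ0 - 2)
    (i : Fin 4) : 0 < singularExponent (skewPalindrome γ0 γ1) i := by
  rw [singularExponent_skewPalindrome]
  fin_cases i <;> dsimp <;> linarith

theorem HasFineStructure.limit_zero_eq (h : HasFineStructure (skewPalindrome γ0 γ1) L w v)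
    (hw : ∀ r i, w r i.rev = -w r i) :
    L 0 = -log (2 ^ (2 * γ0) *
      (Gamma ((1 + γ0) / 4) * Gamma ((4 + γ0 + γ1) / 8) * Gamma ((6 + γ0 - γ1) / 8)) /
      (Gamma ((3 - γ0) / 4) * Gamma ((4 - γ0 - γ1) / 8) * Gamma ((2 - γ0 + γ1) / 8))) := by
  have hpos := h.exponent_pos
  rw [singularExponent_skewPalindrome] at hpos
  have hpos0 : 0 < 1 + γ0 := hpos 0
  have hpos1 : 0 < 1 + (γ1 - γ0) / 2 := hpos 1
  have hpos2 : 0 < 1 - γ1 := hpos 2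
  have hL := h.eq_logGammaProduct_sub hw (skewPalindrome_rev γ0 γ1) 0
  have hlog := log_two_rpow_mul_Gamma_div_Gamma (t := γ0)
    (x := ![1 + γ0, 2 + (γ0 + γ1) / 2, 3 + (γ0 - γ1) / 2])
    (y := ![3 - γ0, 2 - (γ0 + γ1) / 2, 1 + (γ1 - γ0) / 2])
    (fun j => by fin_cases j <;> dsimp <;> linarith)
    (fun j => by fin_cases j <;> dsimp <;> linarith)
    (by simp only [Fin.sum_univ_three, Matrix.cons_val]; ring)
  rw [logGammaProduct_skewPalindrome, show Fin.rev (0 : Fin 4) = 3 from rfl] at hL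
  simp only [Fin.sum_univ_three, Fin.prod_univ_three, Matrix.cons_val] at hL hlog
  rw [show (4 + γ0 + γ1) / 8 = (2 + (γ0 + γ1) / 2) / 4 by ring,
    show (6 + γ0 - γ1) / 8 = (3 + (γ0 - γ1) / 2) / 4 by ring,
    show (4 - γ0 - γ1) / 8 = (2 - (γ0 + γ1) / 2) / 4 by ring,
    show (2 - γ0 + γ1) / 8 = (1 + (γ1 - γ0) / 2) / 4 by ring, hlog, hL]
  ring

theorem HasFineStructure.limit_one_eq (h : HasFineStructure (skewPalindrome γ0 γ1) L w v)
    (hw : ∀ r i, w r i.rev = -w r i) :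
    L 1 = -log (2 ^ (2 * γ1) *
      (Gamma ((3 + γ1) / 4) * Gamma ((4 + γ0 + γ1) / 8) * Gamma ((2 - γ0 + γ1) / 8)) /
      (Gamma ((1 - γ1) / 4) * Gamma ((4 - γ0 - γ1) / 8) * Gamma ((6 + γ0 - γ1) / 8))) := by
  have hpos := h.exponent_pos
  rw [singularExponent_skewPalindrome] at hpos
  have hpos0 : 0 < 1 + γ0 := hpos 0
  have hpos1 : 0 < 1 + (γ1 - γ0) / 2 := hpos 1
  have hpos2 : 0 < 1 - γ1 := hpos 2
  have hL := h.eq_logGammaProduct_sub hw (skewPalindrome_rev γ0 γ1) 1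
  have hlog := log_two_rpow_mul_Gamma_div_Gamma (t := γ1)
    (x := ![3 + γ1, 2 + (γ0 + γ1) / 2, 1 + (γ1 - γ0) / 2])
    (y := ![1 - γ1, 2 - (γ0 + γ1) / 2, 3 + (γ0 - γ1) / 2])
    (fun j => by fin_cases j <;> dsimp <;> linarith)
    (fun j => by fin_cases j <;> dsimp <;> linarith)
    (by simp only [Fin.sum_univ_three, Matrix.cons_val]; ring)
  rw [logGammaProduct_skewPalindrome, show Fin.rev (1 : Fin 4) = 2 from rfl] at hL
  simp only [Fin.sum_univ_three, Fin.prod_univ_three, Matrix.cons_val] at hL hlog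
  rw [show (4 + γ0 + γ1) / 8 = (2 + (γ0 + γ1) / 2) / 4 by ring,
    show (6 + γ0 - γ1) / 8 = (3 + (γ0 - γ1) / 2) / 4 by ring,
    show (4 - γ0 - γ1) / 8 = (2 - (γ0 + γ1) / 2) / 4 by ring,
    show (2 - γ0 + γ1) / 8 = (1 + (γ1 - γ0) / 2) / 4 by ring, hlog, hL]
  ring

end SkewPalindrome

end ConnectionConstants

end FineStructure

/-- Fine structure near `r = 0` in the generic case: for a smooth solution of the radial
tt* system (case 4a) with asymptotic data `(γ0, γ1)` in the open triangle,
`2 wi(r) − γi ln r` converges as `r → 0⁺` to the explicit constants `ρi` built from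
Gamma values. -/
theorem fine_structure_generic_case (γ0 γ1 : ℝ)
    (hγ0 : -1 < γ0) (hγ1 : γ1 < 1) (hγ : γ1 > γ0 - 2)
    (w0 w1 : ℝ → ℝ)
    (hsmooth0 : ContDiffOn ℝ (⊤ : ℕ∞) w0 (Set.Ioi 0)) (hsmooth1 : ContDiffOn ℝ (⊤ : ℕ∞) w1 (Set.Ioi 0))
    (hsol : IsRadialTTStar w0 w1)
    (hlim0 : Tendsto w0 atTop (nhds 0)) (hlim1 : Tendsto w1 atTop (nhds 0))
    (hγ0lim : Tendsto (fun r => 2 * w0 r / Real.log r) (nhdsWithin 0 (Set.Ioi 0)) (nhds γ0))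
    (hγ1lim : Tendsto (fun r => 2 * w1 r / Real.log r) (nhdsWithin 0 (Set.Ioi 0)) (nhds γ1))
    (ρ0 ρ1 : ℝ)
    (hρ0 : ρ0 = -Real.log ((2:ℝ) ^ (2 * γ0) *
      (Real.Gamma ((1 + γ0)/4) * Real.Gamma ((4 + γ0 + γ1)/8) * Real.Gamma ((6 + γ0 - γ1)/8)) /
      (Real.Gamma ((3 - γ0)/4) * Real.Gamma ((4 - γ0 - γ1)/8) * Real.Gamma ((2 - γ0 + γ1)/8))))
    (hρ1 : ρ1 = -Real.log ((2:ℝ) ^ (2 * γ1) *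
      (Real.Gamma ((3 + γ1)/4) * Real.Gamma ((4 + γ0 + γ1)/8) * Real.Gamma ((2 - γ0 + γ1)/8)) /
      (Real.Gamma ((1 - γ1)/4) * Real.Gamma ((4 - γ0 - γ1)/8) * Real.Gamma ((6 + γ0 - γ1)/8)))) :
    Tendsto (fun r => 2 * w0 r - γ0 * Real.log r) (nhdsWithin 0 (Set.Ioi 0)) (nhds ρ0) ∧
    Tendsto (fun r => 2 * w1 r - γ1 * Real.log r) (nhdsWithin 0 (Set.Ioi 0)) (nhds ρ1) := by
  have htoda := hsol.isTodaSolution (contDiffOn_infty.1 hsmooth0 2)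
    (contDiffOn_infty.1 hsmooth1 2) hlim0 hlim1
  have hdata : ∀ i, Tendsto (fun r => 2 * skewPalindrome (w0 r) (w1 r) i / log r)
      (nhdsWithin 0 (Set.Ioi 0)) (nhds (skewPalindrome γ0 γ1 i)) := fun i => by
    convert tendsto_skewPalindrome_apply hγ0lim hγ1lim i using 2
    fin_cases i <;> simp [skewPalindrome] <;> ring
  obtain ⟨L, hL⟩ := htoda.hasFineStructure (singularExponent_skewPalindrome_pos hγ0 hγ1 hγ) hdata
  have hw := fun r => skewPalindrome_rev (w0 r) (w1 r)
  rw [hρ0, hρ1, ← hL.limit_zero_eq hw, ← hL.limit_one_eq hw]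
  exact ⟨hL.tendsto_sub_log 0, hL.tendsto_sub_log 1⟩
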